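/- arXiv:1606.03128 — 4 statements merged into one kernel-verified Lean document; each statement's English description precedes it below -/
import Mathlib

section
/- Separable Hensel's lemma: Let K be a complete normed field (the norm being multiplicative), and let f ∈ K[X] be a monic polynomial of degree n having exactly n distinct roots in an algebraic closure of K. Then there exists ε > 0 such that for every monic polynomial f* ∈ K[X] of degree n all of whose coefficients satisfy ‖coeff_i(f*) − coeff_i(f)‖ < ε for 0 ≤ i < n, the quotient K-algebras K[X]/(f*) and K[X]/(f) are isomorphic as K-algebras. -/
open Polynomial

open scoped Classical

/-!
Write `A = K[X]/(f)`, let `x` be the class of `X`, and view the value at `a ∈ A` of the monic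
polynomial with lower coefficients `c ∈ Kⁿ` as a function `F(c, a)`. Distinctness of the roots
makes `f` separable, so `∂F/∂a = f'(x)` is a unit of `A` at the point (coefficients of `f`, `x`),
where `F` vanishes. `A` is a finite-dimensional commutative algebra over a complete field, hence a
complete normed algebra once it is embedded in the matrices by its regular representation.
The implicit function theorem therefore gives every `g` close to `f` a root `a ∈ A` close to `x`
(`exists_root_and_linearIndependent`). Since `1, x, …, xⁿ⁻¹` are linearly independent and linear
independence is an open condition, so are `1, a, …, aⁿ⁻¹`; hence `X ↦ a` defines a surjective
homomorphism `K[X]/(g) → A` of algebras of the same dimension, an isomorphism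
(`nonempty_algEquiv_of_root`). This requires `K` to be nontrivially normed; if every nonzero
element of `K` has norm `1`, then `ε = 1` forces `g = f`.
-/

/-- A polynomial with as many distinct roots in an algebraic closure as its degree is separable. -/
lemma separable_of_card_roots {K : Type*} [Field K] {f : K[X]} (hf : f.Monic)
    (h : (f.map (algebraMap K (AlgebraicClosure K))).roots.toFinset.card = f.natDegree) :
    f.Separable := by
  have hs := IsAlgClosed.splits (f.map (algebraMap K (AlgebraicClosure K)))
  rw [← nodup_aroots_iff_of_splits hf.ne_zero hs, aroots_def,
    ← Multiset.toFinset_card_eq_card_iff_nodup, h, ← hs.natDegree_eq_card_roots, natDegree_map]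

lemma aeval_eq_pow_add_sum {K A : Type*} [CommRing K] [CommRing A] [Algebra K A]
    {g : K[X]} {n : ℕ} (hg : g.Monic) (hn : g.natDegree = n) (a : A) :
    aeval a g = a ^ n + ∑ i : Fin n, g.coeff i • a ^ (i : ℕ) := by
  subst hn
  conv_lhs => rw [hg.as_sum]
  simp [Finset.sum_range, Algebra.smul_def]

lemma aeval_derivative_eq {K A : Type*} [CommRing K] [CommRing A] [Algebra K A]
    {g : K[X]} {n : ℕ} (hg : g.Monic) (hn : g.natDegree = n) (a : A) :
    aeval a (derivative g) =
      n * a ^ (n - 1) + ∑ i : Fin n, g.coeff i • ((i : ℕ) * a ^ ((i : ℕ) - 1)) := by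
  subst hn
  conv_lhs => rw [hg.as_sum]
  simp [Finset.sum_range, Algebra.smul_def, derivative_X_pow]

/-- The implicit function theorem for roots: a simple root `x` of `f` in a complete commutative
normed algebra moves continuously with the coefficients of `f`, so linear independence of its
first `n` powers persists for all monic `g` close to `f`. -/
lemma exists_root_and_linearIndependent {K : Type*} [NontriviallyNormedField K] [CompleteSpace K]
    {A : Type*} [NormedCommRing A] [NormedAlgebra K A] [CompleteSpace A] {n : ℕ} {f : K[X]}
    (hf : f.Monic) (hn : f.natDegree = n) (x : A) (hx : aeval x f = 0)
    (hx' : IsUnit (aeval x (derivative f)))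
    (hli : LinearIndependent K fun i : Fin n => x ^ (i : ℕ)) :
    ∃ ε > (0 : ℝ), ∀ g : K[X], g.Monic → g.natDegree = n →
      (∀ i < n, ‖g.coeff i - f.coeff i‖ < ε) →
      ∃ a : A, aeval a g = 0 ∧ LinearIndependent K fun i : Fin n => a ^ (i : ℕ) := by
  let F : (Fin n → K) × A → A := fun p => p.2 ^ n + ∑ i : Fin n, p.1 i • p.2 ^ (i : ℕ)
  let c : Fin n → K := fun i => f.coeff i
  have hsnd : HasStrictFDerivAt (fun p : (Fin n → K) × A => p.2)
    (ContinuousLinearMap.snd K (Fin n → K) A) (c, x) := hasStrictFDerivAt_snd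
  have hcoord (i : Fin n) : HasStrictFDerivAt (fun p : (Fin n → K) × A => p.1 i)
      ((ContinuousLinearMap.proj (R := K) i).comp (ContinuousLinearMap.fst K (Fin n → K) A))
      (c, x) :=
    ContinuousLinearMap.hasStrictFDerivAt
      ((ContinuousLinearMap.proj (R := K) i).comp (ContinuousLinearMap.fst K (Fin n → K) A))
  have hF := (hsnd.pow n).add (HasStrictFDerivAt.fun_sum (u := Finset.univ)
    fun i _ => (hcoord i).smul (hsnd.pow (i : ℕ)))
  replace hF : HasStrictFDerivAt F _ (c, x) := hF
  obtain ⟨u, hu⟩ := hx'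
  have hF0 : F (c, x) = 0 := (aeval_eq_pow_add_sum hf hn x).symm.trans hx
  -- The partial derivative in the second variable is multiplication by `f'(x)`.
  have hinv : (fderiv K F (c, x) ∘L .inr K (Fin n → K) A).IsInvertible := by
    refine ⟨ContinuousLinearEquiv.equivOfInverse (ContinuousLinearMap.mul K A u)
      (ContinuousLinearMap.mul K A ↑u⁻¹) (fun y => by simp) (fun y => by simp), ?_⟩
    rw [hF.hasFDerivAt.fderiv]
    ext y
    simp [hu, aeval_derivative_eq hf hn, c]
  rw [hF.hasFDerivAt.fderiv] at hinv
  have hroot := hF.eventually_apply_implicitFunctionOfProdDomain hinv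
  have hlim := hF.tendsto_implicitFunctionOfProdDomain hinv
  set ψ := hF.implicitFunctionOfProdDomain hinv
  have hpow : Filter.Tendsto (fun d => fun i : Fin n => ψ d ^ (i : ℕ)) (nhds c)
      (nhds fun i : Fin n => x ^ (i : ℕ)) :=
    tendsto_pi_nhds.2 fun i => hlim.pow _
  obtain ⟨ε, hε, H⟩ := Metric.eventually_nhds_iff.1 (hroot.and (hpow.eventually hli.eventually))
  refine ⟨ε, hε, fun g hg hgn hclose => ?_⟩
  have hd : dist (fun i : Fin n => g.coeff i) c < ε :=
    (dist_pi_lt_iff hε).2 fun i => by simpa [dist_eq_norm, c] using hclose i i.2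
  obtain ⟨h1, h2⟩ := H hd
  exact ⟨_, (aeval_eq_pow_add_sum hg hgn _).trans (h1.trans hF0), h2⟩

/-- A root `a` of `g` whose first `n` powers are independent in an `n`-dimensional algebra
presents this algebra as `K[X]/(g)`. -/
lemma nonempty_algEquiv_of_root {K A : Type*} [Field K] [CommRing A] [Algebra K A]
    {n : ℕ} (hA : Module.finrank K A = n) [Module.Finite K A]
    {g : K[X]} (hg : g.Monic) (hn : g.natDegree = n) (a : A) (ha : aeval a g = 0)
    (hli : LinearIndependent K fun i : Fin n => a ^ (i : ℕ)) :
    Nonempty (AdjoinRoot g ≃ₐ[K] A) := by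
  subst hn
  have : Module.Finite K (AdjoinRoot g) := hg.finite_adjoinRoot
  let φ : AdjoinRoot g →ₐ[K] A := AdjoinRoot.liftAlgHom g (Algebra.ofId K A) a ha
  have hφ : Function.Surjective φ.toLinearMap := by
    rw [← LinearMap.range_eq_top, eq_top_iff,
      ← hli.span_eq_top_of_card_eq_finrank' (by simp [hA]), Submodule.span_le]
    rintro _ ⟨i, rfl⟩
    exact ⟨AdjoinRoot.root g ^ (i : ℕ), by
      simpa using congrArg (· ^ (i : ℕ)) (AdjoinRoot.liftAlgHom_root g (Algebra.ofId K A) a ha)⟩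
  have hd : Module.finrank K (AdjoinRoot g) = Module.finrank K A := by
    rw [hA]
    exact (AdjoinRoot.powerBasis' hg).finrank
  exact ⟨AlgEquiv.ofBijective φ
    ⟨(LinearMap.injective_iff_surjective_of_finrank_eq_finrank hd).2 hφ, hφ⟩⟩

/-- **Separable Hensel's lemma.** Let `K` be a complete normed field (the norm being
multiplicative) and let `f ∈ K[X]` be a monic polynomial of degree `n` having exactly `n`
distinct roots in an algebraic closure of `K`. Then there is `ε > 0` such that every monic
polynomial `g` of degree `n` with `‖coeff i g - coeff i f‖ < ε` for all `i < n` generates a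
quotient `K`-algebra `K[X]/(g)` isomorphic to `K[X]/(f)`. -/
theorem separable_hensel_lemma {K : Type*} [NormedField K] [CompleteSpace K]
    (n : ℕ) (f : K[X]) (hf : f.Monic) (hdeg : f.natDegree = n)
    (hroots : ((f.map (algebraMap K (AlgebraicClosure K))).roots.toFinset.card = n)) :
    ∃ ε > (0 : ℝ), ∀ g : K[X], g.Monic → g.natDegree = n →
      (∀ i < n, ‖g.coeff i - f.coeff i‖ < ε) →
      Nonempty ((K[X] ⧸ Ideal.span {g}) ≃ₐ[K] (K[X] ⧸ Ideal.span {f})) := by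
  by_cases hK : ∃ x : K, x ≠ 0 ∧ ‖x‖ ≠ 1
  · let _ : NontriviallyNormedField K := NontriviallyNormedField.ofNormNeOne hK
    let pb := AdjoinRoot.powerBasis' hf
    have hfin : Module.Finite K (AdjoinRoot f) := hf.finite_adjoinRoot
    let _ := Matrix.linftyOpNormedRing (n := Fin pb.dim) (α := K)
    let _ := Matrix.linftyOpNormedAlgebra (n := Fin pb.dim) (R := K) (α := K)
    -- The norm on `K[X]/(f)` is pulled back from the matrices by the regular representation.
    let _ : NormedCommRing (AdjoinRoot f) :=
      NormedCommRing.induced _ (Matrix (Fin pb.dim) (Fin pb.dim) K)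
        (Algebra.leftMulMatrix pb.basis) (Algebra.leftMulMatrix_injective _)
    let _ : NormedAlgebra K (AdjoinRoot f) :=
      NormedAlgebra.induced K _ (Matrix (Fin pb.dim) (Fin pb.dim) K)
        (Algebra.leftMulMatrix pb.basis)
    have : CompleteSpace (AdjoinRoot f) := FiniteDimensional.complete K _
    have hx : aeval (AdjoinRoot.root f) f = 0 := by
      rw [AdjoinRoot.aeval_eq, AdjoinRoot.mk_self]
    have hx' : IsUnit (aeval (AdjoinRoot.root f) (derivative f)) := by
      obtain ⟨p, q, h⟩ := separable_of_card_roots hf (hroots.trans hdeg.symm)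
      have h' := congrArg (aeval (AdjoinRoot.root f)) h
      rw [map_add, map_mul, map_mul, hx, mul_zero, zero_add, map_one] at h'
      exact IsUnit.of_mul_eq_one_right _ h'
    have hli : LinearIndependent K fun i : Fin n => AdjoinRoot.root f ^ (i : ℕ) := by
      subst hdeg
      have := pb.basis.linearIndependent
      rwa [pb.coe_basis] at this
    obtain ⟨ε, hε, H⟩ := exists_root_and_linearIndependent hf hdeg _ hx hx' hli
    refine ⟨ε, hε, fun g hg hgn hclose => ?_⟩
    obtain ⟨a, ha, hali⟩ := H g hg hgn hclose
    exact nonempty_algEquiv_of_root (pb.finrank.trans hdeg) hg hgn a ha hali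
  · push Not at hK
    refine ⟨1, one_pos, fun g hg hgn hclose => ?_⟩
    have : g = f := by
      ext i
      rcases lt_trichotomy i n with hi | rfl | hi
      · by_contra hne
        exact (hclose i hi).ne (hK _ (sub_ne_zero.2 hne))
      · have h1 := hg.coeff_natDegree
        have h2 := hf.coeff_natDegree
        rw [hgn] at h1
        rw [hdeg] at h2
        rw [h1, h2]
      · rw [coeff_eq_zero_of_natDegree_lt (hgn ▸ hi), coeff_eq_zero_of_natDegree_lt (hdeg ▸ hi)]
    subst this
    exact ⟨AlgEquiv.refl⟩
end

section
/- Let K be a number field of degree ℓ over ℚ, with s₁ real and s₂ complex infinite places, and absolute discriminant D_K. There exists a constant C > 0 depending only on K with the following property: for every choice of real numbers B_v ≥ 1, one for each infinite place v of K, the number N of algebraic integers α ∈ O_K satisfying |α|_v ≤ B_v for all infinite places v satisfies | N − M | ≤ C · M / min{B_v : v infinite}, where M = 2^{s₁+s₂} π^{s₂} (∏_v B_v^{e_v}) / |D_K|^{1/2} and e_v = 1 if v is real, e_v = 2 if v is complex. -/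
open NumberField

/-!
Let `L` be the image of `𝓞 K` in the mixed space `ℝ^s₁ × ℂ^s₂` and `F` the fundamental parallelepiped
of a `ℤ`-basis of `L`. All coordinates of points of `F` are smaller than some `R`. Attaching to every
integer `α` counted by `N` the translate of `F` by the image of `α` gives disjoint sets, whose union
has volume `N * vol F`, is contained in the body `|x|_v < B_v + R`, and contains the body
`|x|_v < B_v - R` (`exists_packing_bound`). Since `vol F = 2^(-s₂) √|D_K|` and the body of radii `f_v`
has volume `2^s₁ π^s₂ ∏ f_v^(e_v)`, this reads
`M * ∏ (1 - R / B_v)^(e_v) ≤ N ≤ M * ∏ (1 + R / B_v)^(e_v)`.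
With `m = min B_v ≥ 1` and `ℓ = ∑ e_v`, Bernoulli's inequality and the convexity of `x ↦ x^ℓ` bound
these products by `1 - ℓ R / m` and `1 + (1 + R)^ℓ / m`. If some `B_v` is smaller than `R`, the inner
body is unavailable, but then `1 - ℓ R / m < 0` and the lower bound is trivial.
-/

open NumberField.mixedEmbedding NumberField.InfinitePlace MeasureTheory
open scoped NNReal ENNReal

namespace CountIntegers

open scoped Classical

variable (K : Type*) [Field K]


lemma mem_convexBodyLT_iff (f : InfinitePlace K → ℝ≥0) (x : mixedSpace K) :
    x ∈ convexBodyLT K f ↔ ∀ v : InfinitePlace K, normAtPlace v x < f v := by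
  simp only [Set.mem_prod, Set.mem_pi, Set.mem_univ, forall_true_left, mem_ball_zero_iff,
    Subtype.forall]
  constructor
  · rintro ⟨h1, h2⟩ v
    rcases isReal_or_isComplex v with hv | hv
    · rw [normAtPlace_apply_of_isReal hv]; exact h1 v hv
    · rw [normAtPlace_apply_of_isComplex hv]; exact h2 v hv
  · intro h
    refine ⟨fun v hv => ?_, fun v hv => ?_⟩
    · have := h v; rwa [normAtPlace_apply_of_isReal hv] at this
    · have := h v; rwa [normAtPlace_apply_of_isComplex hv] at this

variable [NumberField K]

lemma normAtPlace_le_norm (v : InfinitePlace K) (x : mixedSpace K) : normAtPlace v x ≤ ‖x‖ := by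
  rw [norm_eq_sup'_normAtPlace]
  exact Finset.le_sup' (fun w => normAtPlace w x) (Finset.mem_univ v)

/-- The fundamental parallelepiped of the lattice `𝓞 K` in the mixed space. -/
noncomputable abbrev F : Set (mixedSpace K) := ZSpan.fundamentalDomain (latticeBasis K)

/-- The parallelepiped is bounded, so one `R` bounds its points at every place. -/
lemma exists_radius : ∃ R : ℝ, 0 < R ∧ ∀ x ∈ F K, ∀ v : InfinitePlace K, normAtPlace v x < R := by
  obtain ⟨R, hR, h⟩ := (ZSpan.fundamentalDomain_isBounded (latticeBasis K)).exists_pos_norm_lt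
  exact ⟨R, hR, fun x hx v => (normAtPlace_le_norm K v x).trans_lt (h x hx)⟩

/-- The type of algebraic integers whose absolute value at each infinite place `v` is at most `B v`. -/
abbrev T (B : InfinitePlace K → ℝ) : Type _ :=
  {α : 𝓞 K // ∀ v : InfinitePlace K, v (algebraMap (𝓞 K) K α) ≤ B v}

lemma finite_T (B : InfinitePlace K → ℝ) : Finite (T K B) := by
  have h := Embeddings.finite_of_norm_le K ℂ (∑ v, |B v|)
  have := h.to_subtype
  refine Finite.of_injective
    (fun α : T K B => (⟨algebraMap (𝓞 K) K α.1, RingOfIntegers.isIntegral_coe α.1,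
      (le_iff_le _ _).1 fun v => (α.2 v).trans ((le_abs_self _).trans
        (Finset.single_le_sum (f := fun v => |B v|) (fun _ _ => abs_nonneg _)
          (Finset.mem_univ v)))⟩ :
      {x : K | IsIntegral ℤ x ∧ ∀ φ : K →+* ℂ, ‖φ x‖ ≤ ∑ v, |B v|})) ?_
  intro α β hαβ
  exact Subtype.ext (RingOfIntegers.coe_injective (Subtype.mk.inj hαβ))

/-- The image of an algebraic integer in the mixed space. -/
noncomputable abbrev emb (α : 𝓞 K) : mixedSpace K := mixedEmbedding K (algebraMap (𝓞 K) K α)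

lemma emb_mem_span (α : 𝓞 K) :
    emb K α ∈ Submodule.span ℤ (Set.range (latticeBasis K)) := by
  rw [mem_span_latticeBasis]
  exact ⟨α, rfl⟩

/-- The translate of the fundamental parallelepiped by the image of `α`. -/
def cell (α : 𝓞 K) : Set (mixedSpace K) := (fun y => y + -emb K α) ⁻¹' F K

/-- The cell of `α` consists of the points whose integral part is the image of `α`; hence the cells
tile the mixed space. -/
lemma mem_cell_iff (α : 𝓞 K) (y : mixedSpace K) :
    y ∈ cell K α ↔ emb K α = (ZSpan.floor (latticeBasis K) y : mixedSpace K) := by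
  rw [cell, Set.mem_preimage, ← ZSpan.fract_eq_self,
    ZSpan.fract_add_ZSpan _ _ (neg_mem (emb_mem_span K α)), ZSpan.fract_apply, sub_eq_add_neg]
  rw [add_right_inj, neg_inj, eq_comm]

lemma exists_mem_cell (y : mixedSpace K) : ∃ α : 𝓞 K, y ∈ cell K α := by
  have h := (mem_span_latticeBasis K).1 (ZSpan.floor (latticeBasis K) y).2
  obtain ⟨α, hα⟩ := h
  exact ⟨α, (mem_cell_iff K α y).2 hα⟩

lemma pairwise_disjoint_cell : Pairwise (Function.onFun Disjoint (cell K)) := by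
  intro α β hαβ
  rw [Function.onFun, Set.disjoint_left]
  intro y hα hβ
  rw [mem_cell_iff] at hα hβ
  exact hαβ (RingOfIntegers.coe_injective (mixedEmbedding_injective K (hα.trans hβ.symm)))

lemma volume_iUnion_cell (B : InfinitePlace K → ℝ) :
    volume (⋃ α : T K B, cell K α.1) = Nat.card (T K B) * volume (F K) := by
  have := finite_T K B
  have := Fintype.ofFinite (T K B)
  rw [measure_iUnion]
  · simp only [cell, measure_preimage_add_right]
    rw [tsum_fintype, Finset.sum_const, Finset.card_univ, nsmul_eq_mul, Nat.card_eq_fintype_card]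
  · exact fun α β h => pairwise_disjoint_cell K (fun h' => h (Subtype.ext h'))
  · exact fun α => (measurable_add_const _) (ZSpan.fundamentalDomain_measurableSet _)

lemma volume_F_pos : 0 < (volume (F K)).toReal := by
  refine ENNReal.toReal_pos (ZSpan.measure_fundamentalDomain_ne_zero _) ?_
  exact (ZSpan.fundamentalDomain_isBounded (latticeBasis K)).measure_lt_top.ne

/-- The volume of the body of radii `f`, divided by the covolume of the lattice. The factor
`2 ^ s₂` comes from the covolume `2 ^ (-s₂) * √|D_K|`. -/
noncomputable def mainTerm (f : InfinitePlace K → ℝ) : ℝ :=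
  2 ^ (nrRealPlaces K + nrComplexPlaces K) * Real.pi ^ nrComplexPlaces K *
    (∏ v : InfinitePlace K, f v ^ v.mult) / Real.sqrt |(discr K : ℝ)|

lemma toReal_volume_F :
    (volume (F K)).toReal = (2⁻¹) ^ nrComplexPlaces K * √|(discr K : ℝ)| := by
  rw [← covolume_integerLattice,
    ZLattice.covolume_eq_measure_fundamentalDomain _ _ (fundamentalDomain_integerLattice K),
    measureReal_def]

lemma volume_convexBodyLT (f : InfinitePlace K → ℝ≥0) :
    volume (convexBodyLT K f) =
      ENNReal.ofReal (mainTerm K (fun v => f v) * (volume (F K)).toReal) := by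
  have hD : 0 < √|(discr K : ℝ)| :=
    Real.sqrt_pos.2 (abs_pos.2 (Int.cast_ne_zero.2 (discr_ne_zero K)))
  rw [convexBodyLT_volume, toReal_volume_F, mainTerm]
  rw [← ENNReal.coe_mul, ← ENNReal.ofReal_coe_nnreal]
  congr 1
  push_cast
  rw [pow_add, inv_pow]
  field_simp
  exact mul_comm _ _

lemma toReal_volume_mul (n : ℕ) :
    (n : ℝ≥0∞) * volume (F K) = ENNReal.ofReal (n * (volume (F K)).toReal) := by
  rw [ENNReal.ofReal_mul n.cast_nonneg, ENNReal.ofReal_natCast, ENNReal.ofReal_toReal]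
  exact (ZSpan.fundamentalDomain_isBounded (latticeBasis K)).measure_lt_top.ne

lemma mainTerm_nonneg {f : InfinitePlace K → ℝ} (hf : ∀ v, 0 ≤ f v) : 0 ≤ mainTerm K f := by
  have : 0 ≤ ∏ v : InfinitePlace K, f v ^ v.mult :=
    Finset.prod_nonneg fun v _ => pow_nonneg (hf v) _
  unfold mainTerm
  positivity

/-- Comparing the union of the cells of the counted integers with the bodies whose radii are
enlarged, respectively reduced, by the size of the fundamental parallelepiped. -/
lemma exists_packing_bound : ∃ R : ℝ, 0 < R ∧ ∀ B : InfinitePlace K → ℝ, (∀ v, 1 ≤ B v) →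
    (Nat.card (T K B) : ℝ) ≤ mainTerm K (fun v => B v + R) ∧
    ((∀ v, R ≤ B v) → mainTerm K (fun v => B v - R) ≤ Nat.card (T K B)) := by
  obtain ⟨R, hR, hF⟩ := exists_radius K
  refine ⟨R, hR, fun B hB => ⟨?_, fun hRB => ?_⟩⟩
  · have hBR : ∀ v, 0 ≤ B v + R := fun v => by linarith [hB v]
    have hsub : (⋃ α : T K B, cell K α.1) ⊆ convexBodyLT K (fun v => NNReal.mk (B v + R) (hBR v)) := by
      refine Set.iUnion_subset fun α y hy => ?_
      rw [mem_convexBodyLT_iff]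
      intro v
      have h1 := hF _ hy v
      have h2 := normAtPlace_add_le v (y + -emb K α.1) (emb K α.1)
      rw [neg_add_cancel_right] at h2
      have h3 : normAtPlace v (emb K α.1) ≤ B v := by
        rw [normAtPlace_apply]; exact α.2 v
      change normAtPlace v y < B v + R
      linarith
    have h := measure_mono (μ := volume) hsub
    rw [volume_iUnion_cell, volume_convexBodyLT, toReal_volume_mul] at h
    have h' := (ENNReal.ofReal_le_ofReal_iff (mul_nonneg
      (mainTerm_nonneg K fun v => NNReal.coe_nonneg _) (volume_F_pos K).le)).1 h
    exact le_of_mul_le_mul_right h' (volume_F_pos K)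
  · have hBR : ∀ v, 0 ≤ B v - R := fun v => sub_nonneg.2 (hRB v)
    have hsub : convexBodyLT K (fun v => NNReal.mk (B v - R) (hBR v)) ⊆ (⋃ α : T K B, cell K α.1) := by
      intro y hy
      rw [mem_convexBodyLT_iff] at hy
      obtain ⟨α, hα⟩ := exists_mem_cell K y
      refine Set.mem_iUnion.2 ⟨⟨α, fun v => ?_⟩, hα⟩
      have h1 := hF _ hα v
      have h2 := normAtPlace_add_le v (-(y + -emb K α)) y
      rw [normAtPlace_neg, neg_add, neg_neg, neg_add_cancel_comm, normAtPlace_apply] at h2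
      have h3 : normAtPlace v y < B v - R := hy v
      linarith
    have h := measure_mono (μ := volume) hsub
    rw [volume_iUnion_cell, volume_convexBodyLT, toReal_volume_mul] at h
    have h' := (ENNReal.ofReal_le_ofReal_iff (mul_nonneg
      (Nat.cast_nonneg _) (volume_F_pos K).le)).1 h
    exact le_of_mul_le_mul_right h' (volume_F_pos K)

/-- Scaling all radii of a body by at most `c` scales its volume by at most `c ^ [K : ℚ]`, because the
exponents `e_v` sum to `[K : ℚ]`. -/
lemma mainTerm_le {f g : InfinitePlace K → ℝ} {c : ℝ} (hf : ∀ v, 0 ≤ f v)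
    (h : ∀ v, f v ≤ c * g v) : mainTerm K f ≤ c ^ Module.finrank ℚ K * mainTerm K g := by
  have : ∏ v : InfinitePlace K, f v ^ v.mult ≤
      c ^ Module.finrank ℚ K * ∏ v : InfinitePlace K, g v ^ v.mult := by
    rw [← sum_mult_eq, ← Finset.prod_pow_eq_pow_sum, ← Finset.prod_mul_distrib]
    refine Finset.prod_le_prod (fun v _ => pow_nonneg (hf v) _) fun v _ => ?_
    rw [← mul_pow]
    exact pow_le_pow_left₀ (hf v) (h v) _
  unfold mainTerm
  calc _ ≤ 2 ^ (nrRealPlaces K + nrComplexPlaces K) * Real.pi ^ nrComplexPlaces K *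
        (c ^ Module.finrank ℚ K * ∏ v : InfinitePlace K, g v ^ v.mult) /
          Real.sqrt |(discr K : ℝ)| := by gcongr
    _ = _ := by ring

lemma le_mainTerm {f g : InfinitePlace K → ℝ} {c : ℝ} (hc : 0 ≤ c) (hg : ∀ v, 0 ≤ g v)
    (h : ∀ v, c * g v ≤ f v) : c ^ Module.finrank ℚ K * mainTerm K g ≤ mainTerm K f := by
  rcases hc.eq_or_lt with rfl | hc
  · rw [zero_pow Module.finrank_pos.ne', zero_mul]
    exact mainTerm_nonneg K fun v => by simpa using h v
  · have := mainTerm_le K (f := g) (g := f) (c := c⁻¹) hg fun v => by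
      rw [inv_mul_eq_div, le_div_iff₀ hc, mul_comm]; exact h v
    rwa [inv_pow, inv_mul_eq_div, le_div_iff₀ (pow_pos hc _), mul_comm] at this

/-- The chord of the convex function `x ↦ x ^ n` between `1` and `1 + R` lies above its graph. -/
lemma one_add_div_pow_le {R m : ℝ} (n : ℕ) (hR : 0 < R) (hm : 1 ≤ m) :
    (1 + R / m) ^ n ≤ 1 + (1 + R) ^ n / m := by
  have hm0 : 0 < m := by linarith
  have ht : m⁻¹ ≤ 1 := inv_le_one_of_one_le₀ hm
  have h := (convexOn_pow (𝕜 := ℝ) n).2 (Set.mem_Ici.2 zero_le_one)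
    (Set.mem_Ici.2 (by linarith : (0 : ℝ) ≤ 1 + R)) (sub_nonneg.2 ht)
    (inv_nonneg.2 hm0.le) (by ring)
  simp only [smul_eq_mul, one_pow, mul_one] at h
  have e : 1 - m⁻¹ + m⁻¹ * (1 + R) = 1 + R / m := by ring
  rw [e] at h
  have : 0 < m⁻¹ := by positivity
  rw [div_eq_mul_inv (_ ^ n) m, mul_comm ((1 + R) ^ n)]
  linarith

end CountIntegers

open CountIntegers in
/-- Counting algebraic integers with conjugates bounded at each infinite place:
if `K` is a number field with `s₁` real and `s₂` complex places and discriminant `D_K`,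
there is `C > 0` depending only on `K` such that for all choices of bounds `B_v ≥ 1`
at the infinite places, the number `N` of `α ∈ O_K` with `|α|_v ≤ B_v` for all `v`
satisfies `|N − M| ≤ C·M / min_v B_v`, where
`M = 2^(s₁+s₂) π^(s₂) (∏_v B_v^(e_v)) / |D_K|^(1/2)`
and `e_v = 1` for `v` real, `e_v = 2` for `v` complex. -/
theorem count_integers_with_bounded_conjugates
    (K : Type*) [Field K] [NumberField K] :
    ∃ C > (0 : ℝ), ∀ B : InfinitePlace K → ℝ, (∀ v, 1 ≤ B v) →
      ∀ N M : ℝ,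
      N = (Nat.card {α : 𝓞 K // ∀ v : InfinitePlace K, v (algebraMap (𝓞 K) K α) ≤ B v} : ℝ) →
      M = 2 ^ (InfinitePlace.nrRealPlaces K + InfinitePlace.nrComplexPlaces K) * Real.pi ^ InfinitePlace.nrComplexPlaces K *
            (∏ v : InfinitePlace K, B v ^ v.mult) / Real.sqrt |(discr K : ℝ)| →
      |N - M| ≤ C * M / (Finset.univ.inf' Finset.univ_nonempty B) := by
  obtain ⟨R, hR, hpack⟩ := exists_packing_bound K
  set n := Module.finrank ℚ K with hn
  have hn1 : (1 : ℝ) ≤ n := by exact_mod_cast Module.finrank_pos (R := ℚ) (M := K)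
  -- `(1 + R) ^ n` comes from the upper bound; it also dominates `n * R`, which the lower bound needs.
  refine ⟨(1 + R) ^ n, by positivity, fun B hB N M hN hM => ?_⟩
  obtain ⟨hup, hlow⟩ := hpack B hB
  set m := Finset.univ.inf' Finset.univ_nonempty B with hm
  have hmB : ∀ v, m ≤ B v := fun v => Finset.inf'_le _ (Finset.mem_univ v)
  have hm1 : 1 ≤ m := (Finset.le_inf'_iff _ _).2 fun v _ => hB v
  have hm0 : 0 < m := by linarith
  have hM' : M = mainTerm K B := hM
  have hB0 : ∀ v, 0 ≤ B v := fun v => by linarith [hB v]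
  have hM0 : 0 ≤ M := hM' ▸ mainTerm_nonneg K hB0
  have hRm : ∀ v, R ≤ R / m * B v := fun v => by
    rw [div_mul_eq_mul_div, le_div_iff₀ hm0]
    exact mul_le_mul_of_nonneg_left (hmB v) hR.le
  have hbern : 1 + n * R ≤ (1 + R) ^ n := one_add_mul_le_pow (by linarith) n
  have hlower : (1 - n * R / m) * M ≤ N := by
    rcases le_or_gt R m with h | h
    · have hR1 : R / m ≤ 1 := (div_le_one hm0).2 h
      have h1 := hlow fun v => h.trans (hmB v)
      have h2 := le_mainTerm K (f := fun v => B v - R) (g := B) (c := 1 - R / m)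
        (by linarith) hB0 fun v => by linarith [hRm v]
      have h3 : 1 + n * (-(R / m)) ≤ (1 + -(R / m)) ^ n := one_add_mul_le_pow (by linarith) n
      have h4 := mul_le_mul_of_nonneg_right h3 hM0
      rw [← hM', ← sub_eq_add_neg] at *
      rw [hN]
      refine le_trans (le_of_eq ?_) (h4.trans (h2.trans h1))
      ring
    -- For `m < R` the left side is nonpositive.
    · have h1 : 1 ≤ n * R / m := by
        rw [le_div_iff₀ hm0]; nlinarith
      have h2 : 0 ≤ N := hN ▸ Nat.cast_nonneg _
      nlinarith
  have hupper : N ≤ (1 + (1 + R) ^ n / m) * M := by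
    have h1 := mainTerm_le K (f := fun v => B v + R) (g := B) (c := 1 + R / m)
      (fun v => by linarith [hB0 v]) fun v => by linarith [hRm v]
    rw [hN]
    refine hup.trans (h1.trans ?_)
    rw [← hM']
    exact mul_le_mul_of_nonneg_right (one_add_div_pow_le n hR hm1) hM0
  have e : (1 + R) ^ n * M / m = (1 + R) ^ n / m * M := by ring
  have h5 : n * R / m * M ≤ (1 + R) ^ n / m * M := by
    gcongr
    linarith
  rw [e, abs_sub_le_iff]
  constructor <;> linarith
end

section
/- Let K be a number field of degree ℓ over ℚ. There exists a constant C > 0 depending only on K such that for all real numbers B and E with B ≥ E ≥ 2, the number of algebraic integers α ∈ O_K satisfying max_{v ∈ M_K^∞} |α|_v ≤ B and min_{v ∈ M_K^∞} |α|_v ≤ E is at most C · E · B^{ℓ−1}. -/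
/-!
Fix an integral basis `ω` of `𝓞 K`, an index `k` and an infinite place `v` with embedding `φ`.
If every archimedean absolute value of `α` is at most `B`, all coordinates of `α` are `O(B)`,
because `ω` spans a full lattice under the canonical embedding (`exists_coord_bound`).
If moreover `|α|_v ≤ E`, then the `k`-th coordinate takes only `O(E)` values once the other
`ℓ - 1` coordinates are known: changing it by `m` translates `φ α / φ (ω k)` by `m`, while this
number stays in a disc of radius `E / |φ (ω k)|`. This is made into an injection by replacing the
`k`-th coordinate of `α` with the integer `⌊Re (φ α / φ (ω k))⌋` (`twistedCoord`): the image
lies in a box with `ℓ - 1` sides of length `O(B)` and one of length `O(E)`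
(`count_at_place`). Summing over the finitely many infinite places gives the theorem.
-/

open NumberField

open Module Module.Free

/-- The coordinates of an algebraic integer are bounded linearly by its archimedean absolute
values: the coordinate map of the lattice basis of `(K →+* ℂ) → ℂ` is a bounded operator. -/
lemma exists_coord_bound (K : Type*) [Field K] [NumberField K] :
    ∃ c : ℝ, 0 ≤ c ∧ ∀ (B : ℝ) (α : 𝓞 K),
      (∀ v : InfinitePlace K, v (algebraMap (𝓞 K) K α) ≤ B) →
      ∀ i, |((RingOfIntegers.basis K).repr α i : ℝ)| ≤ c * B := by
  let L := ((canonicalEmbedding.latticeBasis K).equivFunL :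
    ((K →+* ℂ) → ℂ) →L[ℂ] (ChooseBasisIndex ℤ (𝓞 K) → ℂ))
  refine ⟨‖L‖, L.opNorm_nonneg, fun B α hα i => ?_⟩
  have h1 : ‖canonicalEmbedding K (algebraMap (𝓞 K) K α)‖ ≤ B :=
    (canonicalEmbedding.norm_le_iff _ _).2 ((InfinitePlace.le_iff_le _ _).1 hα)
  have h2 : L (canonicalEmbedding K (algebraMap (𝓞 K) K α)) i =
      (((RingOfIntegers.basis K).repr α i : ℤ) : ℂ) := by
    have : L (canonicalEmbedding K (algebraMap (𝓞 K) K α)) i =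
      (canonicalEmbedding.latticeBasis K).repr
        (canonicalEmbedding K (algebraMap (𝓞 K) K α)) i := rfl
    rw [this, canonicalEmbedding.integralBasis_repr_apply, integralBasis_repr_apply]
    simp
  calc |((RingOfIntegers.basis K).repr α i : ℝ)|
      = ‖L (canonicalEmbedding K (algebraMap (𝓞 K) K α)) i‖ := by
        rw [h2, Complex.norm_intCast]
    _ ≤ ‖L (canonicalEmbedding K (algebraMap (𝓞 K) K α))‖ := norm_le_pi_norm _ i
    _ ≤ ‖L‖ * ‖canonicalEmbedding K (algebraMap (𝓞 K) K α)‖ := L.le_opNorm _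
    _ ≤ ‖L‖ * B := by gcongr

open Classical in
/-- The coordinates of `α` in the integral basis `ω`, with the `k`-th one replaced by
`⌊Re (φ α / φ (ω k))⌋`, where `φ` is the embedding attached to `v`. -/
noncomputable def twistedCoord {K : Type*} [Field K] [NumberField K] (v : InfinitePlace K)
    (k : ChooseBasisIndex ℤ (𝓞 K)) (α : 𝓞 K) : ChooseBasisIndex ℤ (𝓞 K) → ℤ :=
  Function.update (fun i => (RingOfIntegers.basis K).repr α i) k
    ⌊(v.embedding (algebraMap (𝓞 K) K α) /
      v.embedding (algebraMap (𝓞 K) K (RingOfIntegers.basis K k))).re⌋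

lemma embedding_basis_ne_zero {K : Type*} [Field K] [NumberField K] (v : InfinitePlace K)
    (k : ChooseBasisIndex ℤ (𝓞 K)) :
    v.embedding (algebraMap (𝓞 K) K (RingOfIntegers.basis K k)) ≠ 0 := by
  rw [map_ne_zero]
  exact RingOfIntegers.coe_ne_zero_iff.2 ((RingOfIntegers.basis K).ne_zero k)

lemma twistedCoord_injective {K : Type*} [Field K] [NumberField K] (v : InfinitePlace K)
    (k : ChooseBasisIndex ℤ (𝓞 K)) : Function.Injective (twistedCoord v k) := by
  intro α β h
  have hw := embedding_basis_ne_zero v k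
  have hne : ∀ i, i ≠ k →
      (RingOfIntegers.basis K).repr α i = (RingOfIntegers.basis K).repr β i := by
    intro i hi
    simpa [twistedCoord, hi] using congrFun h i
  have hk := congrFun h k
  simp only [twistedCoord, Function.update_self] at hk
  set m : ℤ := (RingOfIntegers.basis K).repr α k - (RingOfIntegers.basis K).repr β k with hm
  have hαβ : α = β + m • RingOfIntegers.basis K k := by
    apply (RingOfIntegers.basis K).repr.injective
    rw [map_add, map_zsmul, Basis.repr_self]
    ext i
    by_cases hi : i = k
    · subst hi
      simp [hm]
    · simp [hne i hi, Ne.symm hi]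
  -- The two quotients differ by the integer `m`, so equality of their floors forces `m = 0`.
  have hq : v.embedding (algebraMap (𝓞 K) K α) /
      v.embedding (algebraMap (𝓞 K) K (RingOfIntegers.basis K k)) =
      v.embedding (algebraMap (𝓞 K) K β) /
      v.embedding (algebraMap (𝓞 K) K (RingOfIntegers.basis K k)) + (m : ℂ) := by
    rw [hαβ, zsmul_eq_mul]
    simp only [map_add, map_mul, map_intCast]
    field_simp
  rw [hq, Complex.add_re, Complex.intCast_re, Int.floor_add_intCast] at hk
  have : m = 0 := by omega
  rw [hαβ, this, zero_smul, add_zero]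

lemma card_Icc_floor_le {x : ℝ} (hx : 0 ≤ x) :
    ((Finset.Icc (-⌊x⌋) ⌊x⌋).card : ℝ) ≤ 2 * x + 1 := by
  have h0 : 0 ≤ ⌊x⌋ := Int.floor_nonneg.2 hx
  have h1 : ((Finset.Icc (-⌊x⌋) ⌊x⌋).card : ℤ) = 2 * ⌊x⌋ + 1 := by
    rw [Int.card_Icc]; omega
  have h2 : ((Finset.Icc (-⌊x⌋) ⌊x⌋).card : ℝ) = 2 * ⌊x⌋ + 1 := by exact_mod_cast h1
  rw [h2]
  linarith [Int.floor_le x]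

lemma mem_Icc_floor {x : ℝ} {n : ℤ} (h : |(n : ℝ)| ≤ x) : n ∈ Finset.Icc (-⌊x⌋) ⌊x⌋ := by
  have h1 : |n| ≤ ⌊x⌋ := Int.le_floor.2 (by simpa using h)
  exact Finset.mem_Icc.2 (abs_le.1 h1)

/-- The count for a fixed place `v` at which the absolute value is at most `E`. -/
lemma count_at_place {K : Type*} [Field K] [NumberField K] (v : InfinitePlace K) :
    ∃ C > (0 : ℝ), ∀ B E : ℝ, 2 ≤ E → E ≤ B →
      {α : 𝓞 K | (∀ w : InfinitePlace K, w (algebraMap (𝓞 K) K α) ≤ B) ∧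
          v (algebraMap (𝓞 K) K α) ≤ E}.Finite ∧
      ({α : 𝓞 K | (∀ w : InfinitePlace K, w (algebraMap (𝓞 K) K α) ≤ B) ∧
          v (algebraMap (𝓞 K) K α) ≤ E}.ncard : ℝ) ≤
        C * E * B ^ (Module.finrank ℚ K - 1) := by
  classical
  obtain ⟨c, hc, hcoord⟩ := exists_coord_bound K
  obtain ⟨k⟩ : Nonempty (ChooseBasisIndex ℤ (𝓞 K)) := inferInstance
  set r : ℝ := ‖v.embedding (algebraMap (𝓞 K) K (RingOfIntegers.basis K k))‖ with hr
  have hr0 : 0 < r := norm_pos_iff.2 (embedding_basis_ne_zero v k)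
  refine ⟨(2 / r + 3) * (2 * c + 1) ^ (Module.finrank ℚ K - 1), by positivity,
    fun B E hE hEB => ?_⟩
  set S := {α : 𝓞 K | (∀ w : InfinitePlace K, w (algebraMap (𝓞 K) K α) ≤ B) ∧
          v (algebraMap (𝓞 K) K α) ≤ E}
  have hB : 2 ≤ B := hE.trans hEB
  -- The half-lengths of the box; the `+ 1` accounts for the floor in `twistedCoord`.
  let N : ChooseBasisIndex ℤ (𝓞 K) → ℝ := fun i => if i = k then E / r + 1 else c * B
  have hN : ∀ i, 0 ≤ N i := fun i => by dsimp only [N]; split_ifs <;> positivity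
  let T : Finset (ChooseBasisIndex ℤ (𝓞 K) → ℤ) :=
    Fintype.piFinset fun i => Finset.Icc (-⌊N i⌋) ⌊N i⌋
  have hmaps : Set.MapsTo (twistedCoord v k) S T := by
    rintro α ⟨hα, hαv⟩
    refine Finset.mem_coe.2 (Fintype.mem_piFinset.2 fun i => mem_Icc_floor ?_)
    by_cases hi : i = k
    · subst hi
      simp only [twistedCoord, Function.update_self, N, if_true]
      set z := v.embedding (algebraMap (𝓞 K) K α) /
        v.embedding (algebraMap (𝓞 K) K (RingOfIntegers.basis K i)) with hz
      have h1 : |z.re| ≤ E / r := by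
        refine (Complex.abs_re_le_norm z).trans ?_
        rw [hz, norm_div, InfinitePlace.norm_embedding_eq]
        gcongr
      have h2 := abs_le.1 h1
      exact abs_le.2 ⟨by linarith [Int.lt_floor_add_one z.re], by linarith [Int.floor_le z.re]⟩
    · simpa [twistedCoord, N, hi] using hcoord B α hα i
  have hinj : Set.InjOn (twistedCoord v k) S := (twistedCoord_injective v k).injOn
  refine ⟨Set.Finite.of_injOn hmaps hinj T.finite_toSet, ?_⟩
  have hcard : S.ncard ≤ T.card := by
    rw [← Set.ncard_coe_finset]
    exact Set.ncard_le_ncard_of_injOn _ hmaps hinj T.finite_toSet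
  have hl : Fintype.card (ChooseBasisIndex ℤ (𝓞 K)) = Module.finrank ℚ K := by
    rw [← RingOfIntegers.rank K, finrank_eq_card_chooseBasisIndex]
  calc (S.ncard : ℝ) ≤ T.card := by exact_mod_cast hcard
    _ = ∏ i, ((Finset.Icc (-⌊N i⌋) ⌊N i⌋).card : ℝ) := by
        rw [Fintype.card_piFinset]; push_cast; rfl
    _ ≤ ∏ i, (if i = k then (2 / r + 3) * E else (2 * c + 1) * B) := by
        refine Finset.prod_le_prod (fun i _ => by positivity) fun i _ => ?_
        refine (card_Icc_floor_le (hN i)).trans ?_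
        dsimp only [N]
        split_ifs
        · have : 2 * (E / r + 1) + 1 = 2 / r * E + 3 := by ring
          rw [this]; nlinarith
        · nlinarith
    _ = (2 / r + 3) * E * ((2 * c + 1) * B) ^ (Module.finrank ℚ K - 1) := by
        rw [← Finset.mul_prod_erase _ _ (Finset.mem_univ k), if_pos rfl,
          Finset.prod_congr rfl fun i hi => if_neg (Finset.ne_of_mem_erase hi),
          Finset.prod_const, Finset.card_erase_of_mem (Finset.mem_univ k), Finset.card_univ, hl]
    _ = _ := by rw [mul_pow]; ring

/-- Let `K` be a number field of degree `ℓ`. There is a constant `C > 0` depending only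
on `K` such that for all reals `B ≥ E ≥ 2`, the number of `α ∈ O_K` with
`max_{v ∈ M_K^∞} |α|_v ≤ B` and `min_{v ∈ M_K^∞} |α|_v ≤ E` is at most `C·E·B^(ℓ-1)`. -/
theorem count_integers_small_at_one_place
    (K : Type*) [Field K] [NumberField K] :
    ∃ C > (0 : ℝ), ∀ B E : ℝ, 2 ≤ E → E ≤ B →
      (Nat.card {α : 𝓞 K //
          (∀ v : InfinitePlace K, v (algebraMap (𝓞 K) K α) ≤ B) ∧
          (∃ v : InfinitePlace K, v (algebraMap (𝓞 K) K α) ≤ E)} : ℝ) ≤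
        C * E * B ^ (Module.finrank ℚ K - 1) := by
  choose C hC hcount using fun v : InfinitePlace K => count_at_place v
  refine ⟨∑ v, C v, Finset.sum_pos (fun v _ => hC v) Finset.univ_nonempty,
    fun B E hE hEB => ?_⟩
  let S : InfinitePlace K → Set (𝓞 K) := fun v =>
    {α | (∀ w : InfinitePlace K, w (algebraMap (𝓞 K) K α) ≤ B) ∧ v (algebraMap (𝓞 K) K α) ≤ E}
  have hU : {α : 𝓞 K | (∀ v : InfinitePlace K, v (algebraMap (𝓞 K) K α) ≤ B) ∧
      (∃ v : InfinitePlace K, v (algebraMap (𝓞 K) K α) ≤ E)} = ⋃ v, S v := by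
    ext α
    simp [S]
  have hcard : Nat.card {α : 𝓞 K //
      (∀ v : InfinitePlace K, v (algebraMap (𝓞 K) K α) ≤ B) ∧
      (∃ v : InfinitePlace K, v (algebraMap (𝓞 K) K α) ≤ E)} ≤ ∑ v, (S v).ncard := by
    change Set.ncard {α : 𝓞 K | (∀ v : InfinitePlace K, v (algebraMap (𝓞 K) K α) ≤ B) ∧
      (∃ v : InfinitePlace K, v (algebraMap (𝓞 K) K α) ≤ E)} ≤ _
    rw [hU]
    exact Set.ncard_iUnion_le_of_fintype S
  refine (Nat.cast_le.2 hcard).trans ?_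
  rw [Nat.cast_sum, Finset.sum_mul, Finset.sum_mul]
  exact Finset.sum_le_sum fun v _ => (hcount v B E hE hEB).2
end

section
/- Let K be a number field and let f ∈ K[X] be a K-irreducible polynomial of degree d ≥ 1. Then for any root β ∈ K̄ of f, the field L = K(β) satisfies D(L/K) ≤ d^{3d} · H_p(f)^{2(d−1)}. -/
/-!
Write `d = [L : K]`, `ℓ = [K : ℚ]`, let `a_i` be the coefficients of `f`, let `𝔠` be the fractional
ideal of `K` they generate, `B = (1, β)` the fractional ideal of `L`, and `𝔇` the different. The
idea is to compare `𝔇` with the principal ideal `f'(β)` although `β` is not integral, paying for the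
denominators with powers of `𝔠` and `B`, and to bound `f'(β)` at the infinite places.

Finite places, for `d ≥ 2`. If `f = (X - β) q`, Euler's formula expands every `x ∈ L` as
`f'(β) x = ∑ Tr(x q_i) β ^ i`. For `γ ∈ 𝔠⁻¹` the coefficients `γ q_i` are integral by Gauss's lemma,
and so is `γ a_d β`, hence `γ f'(β) x ∈ B ^ (d - 2)` for all `x ∈ 𝔇⁻¹` (`mem_pow_of_mem_dual`).
Taking norms, `N(𝔇) N(𝔠) ^ d N(B) ^ (d - 2) ≤ |N f'(β)|` (`absNorm_different_le`). The ideal `B`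
is eliminated through `N(𝔠) ≤ |N a_d| N(B)` (`absNorm_one_add_ge`): the values
`a_d N_{L/K}(u + v β)` of the norm form at integers lie in `𝔠`. Thus
`N(𝔇) N(𝔠) ^ (2d - 2) ≤ |N f'(β)| |N a_d| ^ (d - 2)`.

Infinite places. At a root `z` of a complex polynomial of degree `d` with coefficients at most `A`
one has `|f'(z)| ≤ (3/2) d² A max(1, |z|) ^ (d - 2)` (`norm_eval_derivative_le`), and the product of
`|a_d|` and all `max(1, |z|)` is the Mahler measure, at most `√(d + 1) A`. Multiplying over the roots
gives `|N_{L/K} f'(β)|_v |a_d|_v ^ (d - 2) ≤ C A ^ (2d - 2)` (`norm_norm_derivative_mul_le`) with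
`C = ((3/2) d²) ^ d √(d + 1) ^ (d - 2) ≤ d ^ (3d)` (`const_le`).

The product over all infinite places and an `ℓ`-th root give the claim. For `d = 1` both sides
are `1`.
-/

open NumberField Polynomial

/-- The projective (Weil) height of the vector `(a i)_{i ∈ s}` with entries in a number
field `L`: the product over all places `v` of `L` of `max_{i ∈ s} |a i|_v^{[L_v:ℚ_v]}`,
raised to the power `1/[L:ℚ]`.  The contribution of the finite places equals the inverse
of the absolute norm of the fractional ideal generated by the entries. -/
noncomputable def projHeight {L : Type*} [Field L] [NumberField L] {ι : Type*}
    (s : Finset ι) (hs : s.Nonempty) (a : ι → L) : ℝ :=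
  ((∏ v : InfinitePlace L, (s.sup' hs fun i => v (a i)) ^ v.mult) /
      (FractionalIdeal.absNorm (FractionalIdeal.spanFinset (𝓞 L) s a) : ℝ)) ^
    ((Module.finrank ℚ L : ℝ)⁻¹)

/-- `relDq K L = |N_{K/ℚ} Δ(L/K)|^{1/[K:ℚ]}`, where `Δ(L/K)` is the relative discriminant
ideal of `O_L` over `O_K`, i.e. the ideal norm (from `O_L` to `O_K`) of the different
ideal of `O_L/O_K`, and `|N_{K/ℚ}·|` is the absolute norm of an ideal of `O_K`. -/
noncomputable def relDq (K : Type*) [Field K] [NumberField K]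
    (L : IntermediateField K (AlgebraicClosure K)) : ℝ := by
  classical
  exact if h : FiniteDimensional ℚ L then
    letI : FiniteDimensional ℚ L := h
    letI : NumberField L := { to_charZero := inferInstance, to_finiteDimensional := h }
    (Ideal.absNorm (Ideal.spanNorm (𝓞 K) (differentIdeal (𝓞 K) (𝓞 L))) : ℝ) ^
      ((Module.finrank ℚ K : ℝ)⁻¹)
  else 0

open scoped nonZeroDivisors

/-! ### Integrality of coefficients of factors -/

/-- A form of Gauss's lemma: dividing a polynomial with integral coefficients by `X - β` leaves
integral coefficients, although `β` itself need not be integral. The induction peels off the leading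
term `a X ^ n` of the quotient; this works because `a` and `a β` are integral. -/
theorem int_of_X_sub_C_mul {E : Type*} [Field E] (β : E) (q : E[X])
    (h : ∀ i, IsIntegral ℤ (((X - C β) * q).coeff i)) : ∀ i, IsIntegral ℤ (q.coeff i) := by
  induction hn : q.natDegree using Nat.strong_induction_on generalizing q with
  | _ n ih =>
  by_cases hq : q = 0
  · simp [hq, isIntegral_zero]
  set p := (X - C β) * q with hp
  have hlc : p.leadingCoeff = q.leadingCoeff := by simp [hp]
  have hla : IsIntegral ℤ q.leadingCoeff := hlc ▸ h _
  have hpl : p ∈ Polynomial.lifts (algebraMap (integralClosure ℤ E) E) := by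
    rw [Polynomial.lifts_iff_coeff_lifts]
    exact fun i => ⟨⟨_, h i⟩, rfl⟩
  have hlb : IsIntegral ℤ (q.leadingCoeff * β) := by
    obtain ⟨P, hP⟩ := hpl
    replace hP : P.map (algebraMap (integralClosure ℤ E) E) = p := hP
    have h1 : aeval β P = 0 := by
      rw [aeval_def, ← eval_map, hP, hp]; simp
    have h2 := isIntegral_leadingCoeff_smul P β h1
    have h3 : IsIntegral ℤ (P.leadingCoeff • β) := isIntegral_trans _ h2
    have h4 : algebraMap (integralClosure ℤ E) E P.leadingCoeff = q.leadingCoeff := by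
      rw [← hlc, ← hP, leadingCoeff_map_of_injective]
      exact Subtype.val_injective
    rwa [Algebra.smul_def, h4] at h3
  -- Removing the leading term of `q` changes the product only by integral coefficients.
  have key : (X - C β) * q.eraseLead =
      p - C q.leadingCoeff * X ^ (n + 1) + C (q.leadingCoeff * β) * X ^ n := by
    have := q.eraseLead_add_C_mul_X_pow
    rw [hn] at this
    rw [hp]
    rw [map_mul]
    linear_combination (X - C β) * this
  have h5 : ∀ i, IsIntegral ℤ (q.eraseLead.coeff i) := by
    by_cases hn0 : n = 0
    · have : q.eraseLead = 0 := by
        rw [Polynomial.eq_C_of_natDegree_eq_zero (hn.trans hn0)]; simp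
      simp [this, isIntegral_zero]
    refine ih q.eraseLead.natDegree ?_ q.eraseLead ?_ rfl
    · have := q.eraseLead_natDegree_le; omega
    · intro i
      rw [key]
      simp only [coeff_add, coeff_sub, coeff_C_mul_X_pow]
      refine ((h i).sub ?_).add ?_ <;> split_ifs <;> first | assumption | exact isIntegral_zero
  intro i
  rw [← q.eraseLead_add_C_mul_X_pow, coeff_add, coeff_C_mul_X_pow]
  refine (h5 i).add ?_
  split_ifs <;> first | assumption | exact isIntegral_zero

/-- If `c ∏ (X - β s)` has integral coefficients, then so has every partial evaluation: the elements
`c ∏ (u s + v s * β s)` with `u s`, `v s` integral are integral. The scalar `c` varies in the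
induction, which absorbs a factor `u + v β` into the two scalars `c u` and `c v β`. -/
theorem int_mul_prod {E ι : Type*} [Field E] (T : Finset ι) (β u v : ι → E)
    (hu : ∀ i, IsIntegral ℤ (u i)) (hv : ∀ i, IsIntegral ℤ (v i)) (c : E)
    (h : ∀ i, IsIntegral ℤ ((C c * ∏ s ∈ T, (X - C (β s))).coeff i)) :
    IsIntegral ℤ (c * ∏ s ∈ T, (u s + v s * β s)) := by
  classical
  induction T using Finset.induction_on generalizing c with
  | empty => simpa using h 0
  | insert t T ht ih =>
    rw [Finset.prod_insert ht] at h ⊢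
    set q := C c * ∏ s ∈ T, (X - C (β s)) with hq
    have hp : C c * ((X - C (β t)) * ∏ s ∈ T, (X - C (β s))) = (X - C (β t)) * q := by
      rw [hq]; ring
    rw [hp] at h
    have hqi := int_of_X_sub_C_mul _ _ h
    have e : c * ((u t + v t * β t) * ∏ s ∈ T, (u s + v s * β s)) =
        (c * u t) * ∏ s ∈ T, (u s + v s * β s) +
        (c * v t * β t) * ∏ s ∈ T, (u s + v s * β s) := by ring
    rw [e]
    refine (ih _ fun i => ?_).add (ih _ fun i => ?_)
    · have : C (c * u t) * ∏ s ∈ T, (X - C (β s)) = C (u t) * q := by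
        rw [hq, map_mul]; ring
      rw [this, coeff_C_mul]
      exact (hu t).mul (hqi i)
    · have : C (c * v t * β t) * ∏ s ∈ T, (X - C (β s)) =
          C (v t) * (X * q - (X - C (β t)) * q) := by
        rw [hq, map_mul, map_mul]; ring
      rw [this, coeff_C_mul, coeff_sub]
      refine (hv t).mul (IsIntegral.sub ?_ (h i))
      rcases i with _ | i
      · simp [isIntegral_zero]
      · rw [coeff_X_mul]; exact hqi i

/-! ### The roots of `f` and the embeddings of `L` -/

theorem embeddings_injective {K L E : Type*} [Field K] [CharZero K] [Field L] [Algebra K L]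
    [FiniteDimensional K L] [Field E] [Algebra K E]
    (f : K[X]) (hirr : Irreducible f) (hdeg : f.natDegree = Module.finrank K L)
    (β : L) (hβ : aeval β f = 0) : Function.Injective fun σ : L →ₐ[K] E => σ β := by
  have htop : Algebra.adjoin K {β} = ⊤ := by
    have h1 : IntermediateField.adjoin K {β} = ⊤ := by
      rw [Field.primitive_element_iff_minpoly_natDegree_eq, ← hdeg,
        ← minpoly.eq_of_irreducible hirr hβ]
      exact natDegree_mul_C_of_isUnit
        (isUnit_iff_ne_zero.mpr (inv_ne_zero (leadingCoeff_ne_zero.mpr hirr.ne_zero))) f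
    have h2 := IntermediateField.adjoin_simple_toSubalgebra_of_isAlgebraic
      (Algebra.IsAlgebraic.isAlgebraic (R := K) β)
    rw [← h2, h1, IntermediateField.top_toSubalgebra]
  exact fun _ _ h => AlgHom.ext_of_adjoin_eq_top htop (fun _ hx ↦ hx ▸ h)

theorem map_eq_prod_embeddings {K L E : Type*} [Field K] [CharZero K] [Field L] [Algebra K L]
    [FiniteDimensional K L] [Field E] [IsAlgClosed E] [Algebra K E]
    (f : K[X]) (hirr : Irreducible f) (hdeg : f.natDegree = Module.finrank K L)
    (β : L) (hβ : aeval β f = 0) :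
    f.map (algebraMap K E) =
      C (algebraMap K E f.leadingCoeff) * ∏ σ : L →ₐ[K] E, (X - C (σ β)) := by
  classical
  have hinj := embeddings_injective (E := E) f hirr hdeg β hβ
  have hf0 : f.map (algebraMap K E) ≠ 0 := by
    simpa [Polynomial.map_eq_zero] using hirr.ne_zero
  have hroots : (Finset.univ.val.map fun σ : L →ₐ[K] E => σ β) =
      (f.map (algebraMap K E)).roots := by
    apply Multiset.eq_of_le_of_card_le
    · rw [Multiset.le_iff_subset (Finset.univ.nodup.map hinj)]
      intro x hx
      obtain ⟨σ, -, rfl⟩ := Multiset.mem_map.mp hx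
      rw [mem_roots hf0, IsRoot.def, eval_map, ← aeval_def, aeval_algHom_apply, hβ, map_zero]
    · refine (card_roots' _).trans ?_
      rw [natDegree_map, hdeg, Multiset.card_map]
      exact (AlgHom.card K L E).ge
  have h := (IsAlgClosed.splits (f.map (algebraMap K E))).eq_prod_roots
  rw [h, ← hroots, leadingCoeff_map, Multiset.map_map]
  rfl

/-! ### The content of `f` and the different -/

/-- If `γ` clears the denominators of `f`, then it clears those of
the norm form `a_d N_{L/K}(u + v β)` in integral `u` and `v`. -/
theorem isIntegral_mul_norm {K L : Type*} [Field K] [CharZero K] [Field L] [Algebra K L]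
    [FiniteDimensional K L]
    (f : K[X]) (hirr : Irreducible f) (hdeg : f.natDegree = Module.finrank K L)
    (β : L) (hβ : aeval β f = 0) (γ : K) (hγ : ∀ i, IsIntegral ℤ (γ * f.coeff i))
    (u v : L) (hu : IsIntegral ℤ u) (hv : IsIntegral ℤ v) :
    IsIntegral ℤ (γ * f.leadingCoeff * Algebra.norm K (u + v * β)) := by
  let E := AlgebraicClosure K
  have hinj : Function.Injective (algebraMap K E) := (algebraMap K E).injective
  rw [← isIntegral_algebraMap_iff hinj, map_mul, Algebra.norm_eq_prod_embeddings K E]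
  simp only [map_add, map_mul]
  refine int_mul_prod Finset.univ (fun σ : L →ₐ[K] E => σ β) (fun σ => σ u) (fun σ => σ v)
    (fun σ => hu.map (σ.restrictScalars ℤ)) (fun σ => hv.map (σ.restrictScalars ℤ)) _ fun i => ?_
  have h := map_eq_prod_embeddings (E := E) f hirr hdeg β hβ
  rw [map_mul, mul_assoc, ← h, coeff_C_mul, coeff_map, ← map_mul]
  exact (hγ i).algebraMap

/-- Euler's formula: if `f = (X - β) q`, the coefficients of `q / f'(β)` form the basis dual to the
powers of `β` for the trace form. It follows by applying an embedding `τ` of `L` in an algebraically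
closed field `E`, because `σ q` vanishes at `τ β` for `σ ≠ τ` and equals `τ (f'(β))` there for
`σ = τ`. -/
theorem mul_eq_sum_trace_aux {K L : Type*} (E : Type*) [Field K] [CharZero K] [Field L]
    [Algebra K L] [FiniteDimensional K L] [Field E] [IsAlgClosed E] [Algebra K E]
    (f : K[X]) (hirr : Irreducible f) (hdeg : f.natDegree = Module.finrank K L)
    (β : L) (hβ : aeval β f = 0) (q : L[X]) (hq : f.map (algebraMap K L) = (X - C β) * q) (x : L) :
    aeval β (derivative f) * x =
      ∑ i ∈ Finset.range f.natDegree, algebraMap K L (Algebra.trace K L (x * q.coeff i)) * β ^ i := by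
  classical
  have hinj := embeddings_injective (E := E) f hirr hdeg β hβ
  let τ : L →ₐ[K] E := IsAlgClosed.lift
  apply (show Function.Injective τ from τ.injective)
  have hqd : q.natDegree < f.natDegree := by
    have h3 : (f.map (algebraMap K L)).natDegree = q.natDegree + 1 := by
      rw [hq, natDegree_mul (X_sub_C_ne_zero β), natDegree_X_sub_C, add_comm]
      rintro rfl
      rw [mul_zero, Polynomial.map_eq_zero] at hq
      exact hirr.ne_zero hq
    rw [natDegree_map] at h3
    omega
  have hev : ∀ σ : L →ₐ[K] E, (q.map (σ : L →+* E)).eval (τ β) =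
      if σ = τ then τ (aeval β (derivative f)) else 0 := by
    intro σ
    have h1 : f.map (algebraMap K E) = (X - C (σ β)) * q.map (σ : L →+* E) := by
      have := congrArg (Polynomial.map (σ : L →+* E)) hq
      rw [Polynomial.map_map, Polynomial.map_mul] at this
      simpa using this
    split_ifs with hσ
    · subst hσ
      have h2 := congrArg derivative hq
      rw [derivative_map, derivative_mul, derivative_sub, derivative_X, derivative_C] at h2
      have h3 := congrArg (eval β) h2
      rw [eval_map, ← aeval_def] at h3
      rw [h3]
      have h5 := eval₂_at_apply (p := q) (τ : L →+* E) β
      rw [← eval_map] at h5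
      rw [eval_add, eval_mul, eval_mul, eval_sub, eval_sub, eval_X, eval_C, sub_self, zero_mul,
        add_zero, eval_one, eval_zero, sub_zero, one_mul]
      exact h5
    · have h2 := congrArg (eval (τ β)) h1
      rw [eval_map, ← aeval_def, aeval_algHom_apply, hβ, map_zero, eval_mul, eval_sub, eval_X,
        eval_C] at h2
      refine (mul_eq_zero.mp h2.symm).resolve_left (sub_ne_zero.mpr fun h => hσ (hinj h.symm))
  simp only [map_sum, map_mul, map_pow, AlgHom.commutes, trace_eq_sum_embeddings E]
  simp only [Finset.sum_mul]
  rw [Finset.sum_comm]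
  have h4 : ∀ σ : L →ₐ[K] E, ∑ i ∈ Finset.range f.natDegree, σ x * σ (q.coeff i) * τ β ^ i =
      σ x * (q.map (σ : L →+* E)).eval (τ β) := by
    intro σ
    rw [eval_eq_sum_range' (n := f.natDegree) (by rwa [natDegree_map]), Finset.mul_sum]
    refine Finset.sum_congr rfl fun i _ => ?_
    rw [coeff_map, mul_assoc]
    rfl
  simp only [h4, hev, mul_ite, mul_zero, Finset.sum_ite_eq', Finset.mem_univ, if_true]
  exact mul_comm _ _

/-- `mul_eq_sum_trace_aux` with `E` the algebraic closure of `K`. -/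
theorem mul_eq_sum_trace {K L : Type*} [Field K] [CharZero K] [Field L] [Algebra K L]
    [FiniteDimensional K L]
    (f : K[X]) (hirr : Irreducible f) (hdeg : f.natDegree = Module.finrank K L)
    (β : L) (hβ : aeval β f = 0) (q : L[X]) (hq : f.map (algebraMap K L) = (X - C β) * q) (x : L) :
    aeval β (derivative f) * x =
      ∑ i ∈ Finset.range f.natDegree, algebraMap K L (Algebra.trace K L (x * q.coeff i)) * β ^ i :=
  mul_eq_sum_trace_aux (AlgebraicClosure K) f hirr hdeg β hβ q hq x

/-- If `γ` clears the denominators of `f` and `x` lies in the inverse different, then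
`γ f'(β) x ∈ (1, β) ^ (d - 2)`. In Euler's formula all powers `β ^ i` with `i ≤ d - 2` belong to
that ideal; for the last one, `β ^ (d - 1)`, the coefficient is `γ a_d` times a trace, and `γ a_d β`
is integral. -/
theorem mem_pow_of_mem_dual {K L : Type*} [Field K] [NumberField K] [Field L] [NumberField L]
    [Algebra K L]
    (f : K[X]) (hirr : Irreducible f) (hdeg : f.natDegree = Module.finrank K L)
    (h2 : 2 ≤ f.natDegree)
    (β : L) (hβ : aeval β f = 0) (γ : K) (hγ : ∀ i, IsIntegral ℤ (γ * f.coeff i)) (x : L)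
    (hx : x ∈ FractionalIdeal.dual (𝓞 K) K (1 : FractionalIdeal (𝓞 L)⁰ L)) :
    algebraMap K L γ * aeval β (derivative f) * x ∈
      ((1 + FractionalIdeal.spanSingleton (𝓞 L)⁰ β) ^ (f.natDegree - 2) :
        FractionalIdeal (𝓞 L)⁰ L) := by
  set d := f.natDegree with hd
  set B : FractionalIdeal (𝓞 L)⁰ L := 1 + FractionalIdeal.spanSingleton (𝓞 L)⁰ β with hB
  obtain ⟨q, hq⟩ : (X - C β) ∣ f.map (algebraMap K L) := by
    rw [dvd_iff_isRoot, IsRoot.def, eval_map, ← aeval_def, hβ]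
  have hqi : ∀ i, IsIntegral ℤ (algebraMap K L γ * q.coeff i) := by
    intro i
    rw [← coeff_C_mul]
    refine int_of_X_sub_C_mul β _ (fun j => ?_) i
    rw [mul_left_comm, ← hq, coeff_C_mul, coeff_map, ← map_mul]
    exact (hγ j).algebraMap
  have hB1 : (1 : FractionalIdeal (𝓞 L)⁰ L) ≤ B := le_add_of_nonneg_right zero_le
  have hB2 : β ∈ B := (le_add_of_nonneg_left zero_le : _ ≤ B)
    (FractionalIdeal.mem_spanSingleton_self _ β)
  have hBpow : ∀ i ≤ d - 2, β ^ i ∈ B ^ (d - 2) := by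
    intro i hi
    have h1 : B ^ i ≤ B ^ (d - 2) := pow_le_pow_right₀ hB1 hi
    apply h1
    exact Submodule.pow_mem_pow _ hB2 i
  have hmul : ∀ t y : L, IsIntegral ℤ t → y ∈ B ^ (d - 2) → t * y ∈ B ^ (d - 2) := by
    intro t y ht hy
    have := (B ^ (d - 2)).coeToSubmodule.smul_mem (⟨t, ht⟩ : 𝓞 L) hy
    exact this
  have htr : ∀ y : L, IsIntegral ℤ y → IsIntegral ℤ (algebraMap K L (Algebra.trace K L (x * y))) := by
    intro y hy
    have h1 : (1 : FractionalIdeal (𝓞 L)⁰ L) ≠ 0 := one_ne_zero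
    rw [FractionalIdeal.mem_dual h1] at hx
    obtain ⟨t, ht⟩ := hx y ((FractionalIdeal.mem_one_iff _).mpr ⟨⟨y, hy⟩, rfl⟩)
    rw [Algebra.traceForm_apply] at ht
    rw [← ht]
    exact t.2.algebraMap
  have key : algebraMap K L γ * aeval β (derivative f) * x =
      ∑ i ∈ Finset.range d,
        algebraMap K L (Algebra.trace K L (x * (algebraMap K L γ * q.coeff i))) * β ^ i := by
    rw [mul_assoc, mul_eq_sum_trace f hirr hdeg β hβ q hq, Finset.mul_sum]
    refine Finset.sum_congr rfl fun i _ => ?_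
    rw [mul_left_comm x, ← Algebra.smul_def γ (x * _), map_smul, smul_eq_mul,
      (algebraMap K L).map_mul γ, mul_assoc]
  rw [key, ← FractionalIdeal.mem_coe]
  refine Submodule.sum_mem _ fun i hi => ?_
  rw [FractionalIdeal.mem_coe]
  have hi' := Finset.mem_range.mp hi
  by_cases hid : i ≤ d - 2
  · exact hmul _ _ (htr _ (hqi i)) (hBpow i hid)
  · have hid : i = d - 2 + 1 := by omega
    have hqc : q.coeff i = algebraMap K L (f.coeff d) := by
      have : (f.map (algebraMap K L)).coeff (i + 1) = q.coeff i - β * q.coeff (i + 1) := by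
        rw [hq, sub_mul, coeff_sub, coeff_X_mul, coeff_C_mul]
      have hqd : q.natDegree < i + 1 := by
        have h3 : (f.map (algebraMap K L)).natDegree = q.natDegree + 1 := by
          rw [hq, natDegree_mul (X_sub_C_ne_zero β), natDegree_X_sub_C, add_comm]
          rintro rfl
          rw [mul_zero, Polynomial.map_eq_zero] at hq
          exact hirr.ne_zero hq
        rw [natDegree_map, ← hd] at h3
        omega
      rw [coeff_eq_zero_of_natDegree_lt hqd, mul_zero, sub_zero, coeff_map,
        show i + 1 = d by omega] at this
      exact this.symm
    have e : algebraMap K L (Algebra.trace K L (x * (algebraMap K L γ * q.coeff i))) * β ^ i =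
        (algebraMap K L (Algebra.trace K L (x * 1)) * (algebraMap K L γ * q.coeff i * β)) *
          β ^ (d - 2) := by
      rw [hqc, ← map_mul, mul_comm x, ← Algebra.smul_def _ x, map_smul, smul_eq_mul, map_mul,
        hid, pow_succ, mul_one]
      ring
    rw [e]
    refine hmul _ _ ((htr 1 isIntegral_one).mul ?_) (hBpow _ le_rfl)
    obtain ⟨j, rfl⟩ : ∃ j, i = j + 1 := ⟨d - 2, hid⟩
    have : algebraMap K L γ * q.coeff (j+1) * β =
      algebraMap K L γ * q.coeff j - algebraMap K L (γ * f.coeff (j + 1)) := by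
      have : (f.map (algebraMap K L)).coeff (j + 1) = q.coeff j - β * q.coeff (j + 1) := by
        rw [hq, sub_mul, coeff_sub, coeff_X_mul, coeff_C_mul]
      rw [coeff_map] at this
      rw [map_mul, this]
      ring
    rw [this]
    exact (hqi j).sub (hγ _).algebraMap

/-! ### Absolute norms of fractional ideals -/

theorem absNorm_anti {L : Type*} [Field L] [NumberField L] {I J : FractionalIdeal (𝓞 L)⁰ L}
    (hI : I ≠ 0) (h : I ≤ J) : FractionalIdeal.absNorm J ≤ FractionalIdeal.absNorm I := by
  have hJ : J ≠ 0 := fun h0 => hI (le_antisymm (h0 ▸ h) zero_le)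
  have h1 : J⁻¹ * I ≤ 1 := by
    rw [← inv_mul_cancel₀ hJ]; gcongr
  obtain ⟨I₀, hI₀⟩ := FractionalIdeal.le_one_iff_exists_coeIdeal.mp h1
  have h2 : I = J * I₀ := by rw [hI₀, mul_inv_cancel_left₀ hJ]
  have h3 : I₀ ≠ ⊥ := by
    rintro rfl
    exact hI (by simpa using h2)
  have h4 : (1 : ℚ) ≤ Ideal.absNorm I₀ := by
    exact_mod_cast Nat.one_le_iff_ne_zero.mpr (Ideal.absNorm_eq_zero_iff.not.mpr h3)
  rw [h2, map_mul, FractionalIdeal.coeIdeal_absNorm]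
  exact le_mul_of_one_le_right (FractionalIdeal.absNorm_nonneg J) h4

section
variable {K L : Type*} [Field K] [NumberField K] [Field L] [NumberField L] [Algebra K L]

theorem absNorm_spanNorm_eq (I : Ideal (𝓞 L)) :
    Ideal.absNorm (Ideal.spanNorm (𝓞 K) I) = Ideal.absNorm I := by
  rw [Ideal.spanNorm_eq, Ideal.absNorm_relNorm]

theorem absNorm_map_eq (I : Ideal (𝓞 K)) :
    Ideal.absNorm (I.map (algebraMap (𝓞 K) (𝓞 L))) = Ideal.absNorm I ^ Module.finrank K L := by
  rw [Ideal.absNorm_algebraMap, ← IsFractionRing.finrank_eq (𝓞 K) K (𝓞 L) L]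

theorem mem_inv_spanFinset {ι : Type*} (s : Finset ι) (a : ι → K)
    (h0 : FractionalIdeal.spanFinset (𝓞 K) s a ≠ 0) (γ : K)
    (hγ : γ ∈ (FractionalIdeal.spanFinset (𝓞 K) s a)⁻¹) (i : ι) (hi : i ∈ s) :
    IsIntegral ℤ (γ * a i) := by
  rw [FractionalIdeal.mem_inv_iff h0] at hγ
  have : a i ∈ FractionalIdeal.spanFinset (𝓞 K) s a := by
    rw [← FractionalIdeal.mem_coe, FractionalIdeal.spanFinset_coe]
    exact Submodule.subset_span ⟨i, hi, rfl⟩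
  obtain ⟨y, hy⟩ := (FractionalIdeal.mem_one_iff _).mp (hγ _ this)
  rw [← hy]
  exact y.2

/-- The absolute norm of an inclusion `𝔠⁻¹ δ 𝔇⁻¹ ⊆ B ^ n` in `L`, where `𝔠` is a fractional ideal
of `K` and `𝔇` is the different. -/
theorem absNorm_different_le (δ : L) (hδ : δ ≠ 0) (B : FractionalIdeal (𝓞 L)⁰ L) (n : ℕ)
    (c : FractionalIdeal (𝓞 K)⁰ K) (hc : c ≠ 0)
    (hmem : ∀ γ ∈ c⁻¹, ∀ x ∈ FractionalIdeal.dual (𝓞 K) K (1 : FractionalIdeal (𝓞 L)⁰ L),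
      algebraMap K L γ * δ * x ∈ B ^ n) :
    (Ideal.absNorm (differentIdeal (𝓞 K) (𝓞 L)) : ℚ) *
      FractionalIdeal.absNorm c ^ Module.finrank K L * FractionalIdeal.absNorm B ^ n ≤
      |Algebra.norm ℚ δ| := by
  -- Write `𝔠⁻¹ = α⁻¹ 𝔞` with `𝔞` an integral ideal, whose extension to `L` has a known norm.
  obtain ⟨α, 𝔞, hα, hc'⟩ := FractionalIdeal.exists_eq_spanSingleton_mul c⁻¹
  have hα' : (algebraMap (𝓞 K) K α) ≠ 0 := by simpa using hα
  set D := FractionalIdeal.dual (𝓞 K) K (1 : FractionalIdeal (𝓞 L)⁰ L) with hD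
  have hD0 : D ≠ 0 := by simp [hD]
  have h𝔞 : 𝔞 ≠ ⊥ := by
    rintro rfl
    exact hc (inv_eq_zero.mp (by simpa using hc'))
  set y : L := algebraMap K L (algebraMap (𝓞 K) K α)⁻¹ * δ with hy
  have hy0 : y ≠ 0 := mul_ne_zero (by simpa using hα) hδ
  have hle : ((𝔞.map (algebraMap (𝓞 K) (𝓞 L)) : Ideal (𝓞 L)) : FractionalIdeal (𝓞 L)⁰ L) *
      (FractionalIdeal.spanSingleton (𝓞 L)⁰ y * D) ≤ B ^ n := by
    rw [FractionalIdeal.mul_le]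
    intro i hi j hj
    obtain ⟨t, ht, rfl⟩ := (FractionalIdeal.mem_coeIdeal _).mp hi
    obtain ⟨x, hx, rfl⟩ := FractionalIdeal.mem_singleton_mul.mp hj
    clear hi hj
    induction ht using Submodule.span_induction with
    | mem t ht =>
      obtain ⟨a, ha, rfl⟩ := ht
      have : (algebraMap (𝓞 K) K α)⁻¹ * algebraMap (𝓞 K) K a ∈ c⁻¹ := by
        rw [hc', FractionalIdeal.mem_singleton_mul]
        exact ⟨_, FractionalIdeal.mem_coeIdeal_of_mem _ ha, rfl⟩
      have h1 := hmem _ this x hx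
      have e : algebraMap (𝓞 L) L (algebraMap (𝓞 K) (𝓞 L) a) =
          algebraMap K L (algebraMap (𝓞 K) K a) := rfl
      rw [map_mul] at h1
      convert! h1 using 1
      rw [hy, e]
      ring
    | zero => simp [FractionalIdeal.zero_mem]
    | add a b _ _ ha hb => rw [map_add, add_mul]; exact (B ^ n).coeToSubmodule.add_mem ha hb
    | smul r a _ ha =>
      have := (B ^ n).coeToSubmodule.smul_mem r ha
      rw [Algebra.smul_def] at this
      rwa [smul_eq_mul, map_mul, mul_assoc]
  have hmap0 : 𝔞.map (algebraMap (𝓞 K) (𝓞 L)) ≠ ⊥ := by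
    rwa [Ne, Ideal.map_eq_bot_iff_of_injective (FaithfulSMul.algebraMap_injective _ _)]
  have hne : ((𝔞.map (algebraMap (𝓞 K) (𝓞 L)) : Ideal (𝓞 L)) : FractionalIdeal (𝓞 L)⁰ L) *
      (FractionalIdeal.spanSingleton (𝓞 L)⁰ y * D) ≠ 0 := by
    refine mul_ne_zero (by simpa using hmap0) (mul_ne_zero ?_ hD0)
    exact FractionalIdeal.spanSingleton_ne_zero_iff.mpr hy0
  have h := absNorm_anti hne hle
  have hdiff : (FractionalIdeal.absNorm D) *
      (Ideal.absNorm (differentIdeal (𝓞 K) (𝓞 L)) : ℚ) = 1 := by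
    rw [← FractionalIdeal.coeIdeal_absNorm (K := L), coeIdeal_differentIdeal (𝓞 K) K, ← map_mul,
      mul_inv_cancel₀ hD0, map_one]
  have hcn := congrArg FractionalIdeal.absNorm hc'
  rw [map_inv₀, map_mul, FractionalIdeal.absNorm_span_singleton, FractionalIdeal.coeIdeal_absNorm,
    Algebra.norm_inv, abs_inv] at hcn
  rw [map_mul, map_mul, map_pow, FractionalIdeal.coeIdeal_absNorm, absNorm_map_eq,
    FractionalIdeal.absNorm_span_singleton, hy, map_mul, abs_mul] at h
  have hnorm : |Algebra.norm ℚ (algebraMap K L (algebraMap (𝓞 K) K α)⁻¹)| =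
      (|Algebra.norm ℚ (algebraMap (𝓞 K) K α)|⁻¹) ^ Module.finrank K L := by
    rw [← Algebra.norm_norm (S := K), Algebra.norm_algebraMap, map_pow, abs_pow, Algebra.norm_inv, abs_inv]
  rw [hnorm] at h
  have hcpos : 0 < FractionalIdeal.absNorm c := (FractionalIdeal.absNorm_nonneg c).lt_of_ne'
    (FractionalIdeal.absNorm_eq_zero_iff.not.mpr hc)
  set N := (Ideal.absNorm (differentIdeal (𝓞 K) (𝓞 L)) : ℚ)
  have hN : 0 ≤ N := Nat.cast_nonneg _
  have h5 : FractionalIdeal.absNorm B ^ n ≤ (FractionalIdeal.absNorm c)⁻¹ ^ Module.finrank K L *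
      |Algebra.norm ℚ δ| * FractionalIdeal.absNorm D := by
    refine h.trans_eq ?_
    rw [hcn, mul_pow]
    push_cast
    ring
  calc _ ≤ N * FractionalIdeal.absNorm c ^ Module.finrank K L *
      ((FractionalIdeal.absNorm c)⁻¹ ^ Module.finrank K L *
      |Algebra.norm ℚ δ| * FractionalIdeal.absNorm D) := by gcongr
    _ = (FractionalIdeal.absNorm D * N) * (FractionalIdeal.absNorm c *
      (FractionalIdeal.absNorm c)⁻¹) ^ Module.finrank K L *
      |Algebra.norm ℚ δ| := by rw [mul_pow]; ring
    _ = _ := by rw [hdiff, mul_inv_cancel₀ hcpos.ne', one_pow, one_mul, one_mul]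

/-- The inequality `N 𝔠 ≤ |N a| N(1, β)`, given that `a N_{L/K}(u + v β) ∈ 𝔠` for all integral `u`
and `v`. The hypothesis expresses this membership through the multipliers `γ ∈ 𝔠⁻¹`. -/
theorem absNorm_one_add_ge (lc : K) (hlc : lc ≠ 0) (β : L)
    (c : FractionalIdeal (𝓞 K)⁰ K) (hc : c ≠ 0)
    (hmem : ∀ γ ∈ c⁻¹, ∀ u v : L, IsIntegral ℤ u → IsIntegral ℤ v →
      IsIntegral ℤ (γ * lc * Algebra.norm K (u + v * β))) :
    FractionalIdeal.absNorm c ≤ |Algebra.norm ℚ lc| *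
      FractionalIdeal.absNorm (1 + FractionalIdeal.spanSingleton (𝓞 L)⁰ β) := by
  obtain ⟨α, 𝔞, hα, hc'⟩ := FractionalIdeal.exists_eq_spanSingleton_mul c⁻¹
  have hα' : (algebraMap (𝓞 K) K α) ≠ 0 := by simpa using hα
  have h𝔞 : 𝔞 ≠ ⊥ := by
    rintro rfl
    exact hc (inv_eq_zero.mp (by simpa using hc'))
  set B := 1 + FractionalIdeal.spanSingleton (𝓞 L)⁰ β with hB
  obtain ⟨e, J, he, hBJ⟩ := FractionalIdeal.exists_eq_spanSingleton_mul B
  have he' : (algebraMap (𝓞 L) L e) ≠ 0 := by simpa using he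
  have hB1 : (1 : FractionalIdeal (𝓞 L)⁰ L) ≤ B := le_add_of_nonneg_right zero_le
  have hB0 : B ≠ 0 := fun h0 => one_ne_zero (le_antisymm (h0 ▸ hB1) zero_le)
  have hJ : J ≠ ⊥ := by
    rintro rfl
    exact hB0 (by simpa using hBJ)
  -- With `𝔠⁻¹ = α⁻¹ 𝔞` and `(1, β) = e⁻¹ J`, the hypothesis says `a 𝔞 N(J) ⊆ (α N(e))`.
  set w : K := algebraMap (𝓞 K) K α * Algebra.norm K (algebraMap (𝓞 L) L e) with hw
  have hle : FractionalIdeal.spanSingleton (𝓞 K)⁰ lc *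
      ((𝔞 * Ideal.spanNorm (𝓞 K) J : Ideal (𝓞 K)) : FractionalIdeal (𝓞 K)⁰ K) ≤
      FractionalIdeal.spanSingleton (𝓞 K)⁰ w := by
    rw [FractionalIdeal.coeIdeal_mul, FractionalIdeal.spanSingleton_mul_le_iff]
    intro z hz
    refine FractionalIdeal.mul_induction_on hz ?_ ?_
    · intro a' ha' b hb
      obtain ⟨a, ha, rfl⟩ := (FractionalIdeal.mem_coeIdeal _).mp ha'
      obtain ⟨t, ht, rfl⟩ := (FractionalIdeal.mem_coeIdeal _).mp hb
      clear ha' hb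
      induction ht using Submodule.span_induction with
      | mem t ht =>
        obtain ⟨j, hj, rfl⟩ := ht
        have hγ : (algebraMap (𝓞 K) K α)⁻¹ * algebraMap (𝓞 K) K a ∈ c⁻¹ := by
          rw [hc', FractionalIdeal.mem_singleton_mul]
          exact ⟨_, FractionalIdeal.mem_coeIdeal_of_mem _ ha, rfl⟩
        have hjB : (algebraMap (𝓞 L) L e)⁻¹ * algebraMap (𝓞 L) L j ∈ B := by
          rw [hBJ, FractionalIdeal.mem_singleton_mul]
          exact ⟨_, FractionalIdeal.mem_coeIdeal_of_mem _ hj, rfl⟩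
        obtain ⟨u', hu', v', hv', huv⟩ := (FractionalIdeal.mem_add _ _ _).mp hjB
        obtain ⟨u, rfl⟩ := (FractionalIdeal.mem_one_iff _).mp hu'
        obtain ⟨v, rfl⟩ := (FractionalIdeal.mem_spanSingleton _).mp hv'
        have h1 := hmem _ hγ _ _ u.2 v.2
        rw [FractionalIdeal.mem_spanSingleton]
        refine ⟨⟨_, h1⟩, ?_⟩
        rw [Algebra.smul_def] at huv
        change algebraMap (𝓞 L) L u + algebraMap (𝓞 L) L v * β = _ at huv
        change ((algebraMap (𝓞 K) K α)⁻¹ * algebraMap (𝓞 K) K a * lc *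
          Algebra.norm K (algebraMap (𝓞 L) L u + algebraMap (𝓞 L) L v * β)) * w = _
        have hNe : Algebra.norm K (algebraMap (𝓞 L) L e) ≠ 0 := Algebra.norm_ne_zero_iff.mpr he'
        rw [huv, Algebra.algebraMap_intNorm (L := L), map_mul, Algebra.norm_inv, hw]
        field_simp
      | zero => simp [FractionalIdeal.zero_mem]
      | add x y _ _ hx hy =>
        rw [map_add, mul_add, mul_add]
        exact (FractionalIdeal.spanSingleton (𝓞 K)⁰ w).coeToSubmodule.add_mem hx hy
      | smul r x _ hx =>
        have := (FractionalIdeal.spanSingleton (𝓞 K)⁰ w).coeToSubmodule.smul_mem r hx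
        rw [Algebra.smul_def] at this
        convert! this using 1
        rw [smul_eq_mul, map_mul]
        ring
    · intro x y hx hy
      rw [mul_add]
      exact (FractionalIdeal.spanSingleton (𝓞 K)⁰ w).coeToSubmodule.add_mem hx hy
  have hne : FractionalIdeal.spanSingleton (𝓞 K)⁰ lc *
      ((𝔞 * Ideal.spanNorm (𝓞 K) J : Ideal (𝓞 K)) : FractionalIdeal (𝓞 K)⁰ K) ≠ 0 := by
    refine mul_ne_zero (FractionalIdeal.spanSingleton_ne_zero_iff.mpr hlc) ?_
    rw [Ne, FractionalIdeal.coeIdeal_eq_zero]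
    exact mul_ne_zero h𝔞 ((Ideal.spanNorm_eq_bot_iff).not.mpr hJ)
  have h := absNorm_anti hne hle
  have hcn := congrArg FractionalIdeal.absNorm hc'
  rw [map_inv₀, map_mul, FractionalIdeal.absNorm_span_singleton, FractionalIdeal.coeIdeal_absNorm,
    Algebra.norm_inv, abs_inv] at hcn
  have hBn := congrArg FractionalIdeal.absNorm hBJ
  rw [map_mul, FractionalIdeal.absNorm_span_singleton, FractionalIdeal.coeIdeal_absNorm,
    Algebra.norm_inv, abs_inv] at hBn
  have hwn : Algebra.norm ℚ w = Algebra.norm ℚ (algebraMap (𝓞 K) K α) *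
      Algebra.norm ℚ (algebraMap (𝓞 L) L e) := by
    rw [hw, map_mul, Algebra.norm_norm]
  rw [FractionalIdeal.absNorm_span_singleton, hwn, abs_mul,
    map_mul FractionalIdeal.absNorm, FractionalIdeal.absNorm_span_singleton,
    FractionalIdeal.coeIdeal_absNorm, map_mul Ideal.absNorm, absNorm_spanNorm_eq] at h
  have hcpos : 0 < FractionalIdeal.absNorm c := (FractionalIdeal.absNorm_nonneg c).lt_of_ne'
    (FractionalIdeal.absNorm_eq_zero_iff.not.mpr hc)
  have h1 : 0 < |Algebra.norm ℚ (algebraMap (𝓞 K) K α)| :=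
    abs_pos.mpr (Algebra.norm_ne_zero_iff.mpr hα')
  have h2 : 0 < |Algebra.norm ℚ (algebraMap (𝓞 L) L e)| :=
    abs_pos.mpr (Algebra.norm_ne_zero_iff.mpr he')
  have h3 : (Ideal.absNorm 𝔞 : ℚ) * FractionalIdeal.absNorm c =
      |Algebra.norm ℚ (algebraMap (𝓞 K) K α)| := by
    field_simp at hcn
    linarith
  have h4 : (Ideal.absNorm J : ℚ) =
      |Algebra.norm ℚ (algebraMap (𝓞 L) L e)| * FractionalIdeal.absNorm B := by
    rw [hBn]
    field_simp
  have h𝔞pos : 0 < (Ideal.absNorm 𝔞 : ℚ) := by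
    exact_mod_cast Nat.pos_of_ne_zero (Ideal.absNorm_eq_zero_iff.not.mpr h𝔞)
  rw [← h3] at h
  push_cast at h
  rw [h4] at h
  refine le_of_mul_le_mul_left ?_ (mul_pos h𝔞pos h2)
  linarith
end

/-! ### Archimedean estimates -/

/-- A root of a complex polynomial is not large compared with the coefficients: `a_d z` is at most
`d` times the largest coefficient. -/
theorem norm_leadingCoeff_mul_root_le (g : ℂ[X]) (n : ℕ) (hn : g.natDegree = n + 1) (z : ℂ)
    (hz : g.eval z = 0) (A : ℝ) (hA : ∀ i, ‖g.coeff i‖ ≤ A) :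
    ‖g.coeff (n + 1) * z‖ ≤ (n + 1) * A := by
  have hA0 : 0 ≤ A := (norm_nonneg _).trans (hA 0)
  rcases le_total ‖z‖ 1 with h | h
  · calc ‖g.coeff (n + 1) * z‖ ≤ A * 1 := by
          rw [norm_mul]; gcongr; exact hA _
      _ ≤ (n + 1) * A := by nlinarith [(Nat.cast_nonneg n : (0 : ℝ) ≤ n)]
  · have hz0 : 0 < ‖z‖ ^ n := by positivity
    refine le_of_mul_le_mul_right ?_ hz0
    rw [eval_eq_sum_range, hn, Finset.sum_range_succ] at hz
    have e : g.coeff (n + 1) * z * z ^ n = -∑ i ∈ Finset.range (n + 1), g.coeff i * z ^ i := by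
      rw [pow_succ] at hz
      linear_combination hz
    calc ‖g.coeff (n + 1) * z‖ * ‖z‖ ^ n = ‖∑ i ∈ Finset.range (n + 1), g.coeff i * z ^ i‖ := by
          rw [← norm_pow, ← norm_mul, e, norm_neg]
      _ ≤ ∑ i ∈ Finset.range (n + 1), A * ‖z‖ ^ n := by
          refine norm_sum_le_of_le _ fun i hi => ?_
          rw [norm_mul, norm_pow]
          gcongr
          · exact hA i
          · have := Finset.mem_range.mp hi; omega
      _ = (n + 1) * A * ‖z‖ ^ n := by simp [mul_assoc]

/-- A bound for the derivative at a root with exponent `d - 2` of `max 1 ‖z‖`, one less than the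
degree of the derivative. The gain comes from bounding the top term `d a_d z ^ (d - 1)` by
`norm_leadingCoeff_mul_root_le`. -/
theorem norm_eval_derivative_le (g : ℂ[X]) (n : ℕ) (hn : g.natDegree = n + 2) (z : ℂ)
    (hz : g.eval z = 0) (A : ℝ) (hA : ∀ i, ‖g.coeff i‖ ≤ A) :
    ‖(derivative g).eval z‖ ≤ 3 / 2 * ((n + 2 : ℕ) : ℝ) ^ 2 * A * max 1 ‖z‖ ^ n := by
  have hA0 : 0 ≤ A := (norm_nonneg _).trans (hA 0)
  set m := max 1 ‖z‖ with hm
  have hm1 : 1 ≤ m := le_max_left _ _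
  have hmz : ‖z‖ ≤ m := le_max_right _ _
  have hd : (derivative g).natDegree < n + 2 := hn ▸ natDegree_derivative_lt (by omega)
  rw [eval_eq_sum_range' hd, Finset.sum_range_succ]
  have h1 : ‖∑ i ∈ Finset.range (n + 1), (derivative g).coeff i * z ^ i‖ ≤
      ∑ i ∈ Finset.range (n + 1), ((i : ℝ) + 1) * (A * m ^ n) := by
    refine norm_sum_le_of_le _ fun i hi => ?_
    rw [coeff_derivative, norm_mul, norm_pow, norm_mul]
    have e : ‖(i : ℂ) + 1‖ = (i : ℝ) + 1 := by
      have := Complex.norm_natCast (i + 1); push_cast at this; exact this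
    rw [e]
    have hi' : i ≤ n := by have := Finset.mem_range.mp hi; omega
    calc ‖g.coeff (i + 1)‖ * ((i : ℝ) + 1) * ‖z‖ ^ i ≤ A * ((i : ℝ) + 1) * m ^ n := by
          gcongr ?_ * _ * ?_
          · exact hA _
          · exact (pow_le_pow_left₀ (norm_nonneg _) hmz i).trans (pow_le_pow_right₀ hm1 hi')
      _ = _ := by ring
  have hsum : ∑ i ∈ Finset.range (n + 1), ((i : ℝ) + 1) = (n + 1) * (n + 2) / 2 := by
    clear * -
    induction n with
    | zero => norm_num
    | succ n ih => rw [Finset.sum_range_succ, ih]; push_cast; ring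
  have h2 : ‖(derivative g).coeff (n + 1) * z ^ (n + 1)‖ ≤ ((n : ℝ) + 2) ^ 2 * A * m ^ n := by
    have h3 := norm_leadingCoeff_mul_root_le g (n + 1) hn z hz A hA
    have e : (derivative g).coeff (n + 1) * z ^ (n + 1) =
        ((n + 2 : ℕ) : ℂ) * (g.coeff (n + 1 + 1) * z) * z ^ n := by
      rw [coeff_derivative]; push_cast; ring
    rw [e, norm_mul, norm_mul, norm_pow, Complex.norm_natCast]
    push_cast at h3 ⊢
    calc ((n : ℝ) + 2) * ‖g.coeff (n + 1 + 1) * z‖ * ‖z‖ ^ n ≤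
        ((n : ℝ) + 2) * (((n : ℝ) + 1 + 1) * A) * m ^ n := by gcongr
      _ = _ := by ring
  refine (norm_add_le _ _).trans ((add_le_add h1 h2).trans ?_)
  rw [← Finset.sum_mul, hsum]
  have h4 : 0 ≤ A * m ^ n := by positivity
  push_cast
  have hn0 : (0 : ℝ) ≤ n := Nat.cast_nonneg n
  nlinarith [mul_nonneg hn0 h4]

/-- Landau's inequality for the Mahler measure of `f` at a complex embedding of `K`, with the roots
indexed by the extensions of that embedding to `L`. -/
theorem prod_max_mul_le {K L : Type*} [Field K] [CharZero K] [Field L] [Algebra K L]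
    [FiniteDimensional K L] [Algebra K ℂ]
    (f : K[X]) (hirr : Irreducible f) (hdeg : f.natDegree = Module.finrank K L)
    (β : L) (hβ : aeval β f = 0) (A : ℝ) (hA : ∀ i, ‖algebraMap K ℂ (f.coeff i)‖ ≤ A) :
    ‖algebraMap K ℂ f.leadingCoeff‖ * ∏ σ : L →ₐ[K] ℂ, max 1 ‖σ β‖ ≤
      √(f.natDegree + 1) * A := by
  have h := map_eq_prod_embeddings (E := ℂ) f hirr hdeg β hβ
  have h1 := mahlerMeasure_le_sqrt_natDegree_add_one_mul_supNorm (f.map (algebraMap K ℂ))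
  obtain ⟨i, hi⟩ := (f.map (algebraMap K ℂ)).exists_eq_supNorm
  have h2 : (f.map (algebraMap K ℂ)).mahlerMeasure =
      ‖algebraMap K ℂ f.leadingCoeff‖ * ∏ σ : L →ₐ[K] ℂ, max 1 ‖σ β‖ := by
    rw [h, mahlerMeasure_mul, mahlerMeasure_const, Finset.prod_eq_multiset_prod,
      prod_mahlerMeasure_eq_mahlerMeasure_prod, Multiset.map_map]
    simp [mahlerMeasure_X_sub_C]
  rw [← h2]
  rw [natDegree_map] at h1
  refine h1.trans ?_
  gcongr
  rw [hi, coeff_map]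
  exact hA i

theorem norm_norm_derivative_mul_le {K L : Type*} [Field K] [CharZero K] [Field L] [Algebra K L]
    [FiniteDimensional K L] [Algebra K ℂ]
    (f : K[X]) (hirr : Irreducible f) (hdeg : f.natDegree = Module.finrank K L)
    (n : ℕ) (hn : f.natDegree = n + 2)
    (β : L) (hβ : aeval β f = 0) (A : ℝ) (hA : ∀ i, ‖algebraMap K ℂ (f.coeff i)‖ ≤ A) :
    ‖algebraMap K ℂ (Algebra.norm K (aeval β (derivative f)))‖ *
      ‖algebraMap K ℂ f.leadingCoeff‖ ^ n ≤
      (3 / 2 * ((n + 2 : ℕ) : ℝ) ^ 2) ^ (n + 2) * √((n + 2 : ℕ) + 1) ^ n * A ^ (2 * n + 2) := by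
  have hA0 : 0 ≤ A := (norm_nonneg _).trans (hA 0)
  rw [Algebra.norm_eq_prod_embeddings K ℂ, norm_prod]
  have hσ : ∀ σ : L →ₐ[K] ℂ, ‖σ (aeval β (derivative f))‖ ≤
      3 / 2 * ((n + 2 : ℕ) : ℝ) ^ 2 * A * max 1 ‖σ β‖ ^ n := by
    intro σ
    have := norm_eval_derivative_le (f.map (algebraMap K ℂ)) n (by rw [natDegree_map, hn]) (σ β)
      (by rw [eval_map, ← aeval_def, aeval_algHom_apply, hβ, map_zero]) A
      (fun i => by rw [coeff_map]; exact hA i)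
    rwa [derivative_map, eval_map, ← aeval_def, aeval_algHom_apply] at this
  have h1 := Finset.prod_le_prod (s := Finset.univ) (fun σ _ => norm_nonneg _) fun σ _ => hσ σ
  rw [Finset.prod_mul_distrib, Finset.prod_const, Finset.card_univ, AlgHom.card, ← hdeg, hn,
    Finset.prod_pow] at h1
  have h2 := prod_max_mul_le f hirr hdeg β hβ A hA
  have hp : 0 ≤ ∏ σ : L →ₐ[K] ℂ, max 1 ‖σ β‖ :=
    Finset.prod_nonneg fun σ _ => zero_le_one.trans (le_max_left _ _)
  rw [hn] at h2
  calc _ ≤ (3 / 2 * ((n + 2 : ℕ) : ℝ) ^ 2 * A) ^ (n + 2) * (∏ σ : L →ₐ[K] ℂ, max 1 ‖σ β‖) ^ n *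
        ‖algebraMap K ℂ f.leadingCoeff‖ ^ n := by gcongr
    _ = (3 / 2 * ((n + 2 : ℕ) : ℝ) ^ 2 * A) ^ (n + 2) * (‖algebraMap K ℂ f.leadingCoeff‖ *
        ∏ σ : L →ₐ[K] ℂ, max 1 ‖σ β‖) ^ n := by rw [mul_pow ‖_‖]; ring
    _ ≤ (3 / 2 * ((n + 2 : ℕ) : ℝ) ^ 2 * A) ^ (n + 2) * (√((n + 2 : ℕ) + 1) * A) ^ n := by gcongr
    _ = _ := by ring

theorem const_le (n : ℕ) : (3 / 2 * ((n + 2 : ℕ) : ℝ) ^ 2) ^ (n + 2) * √((n + 2 : ℕ) + 1) ^ n ≤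
    ((n + 2 : ℕ) : ℝ) ^ (3 * (n + 2)) := by
  set d : ℝ := ((n + 2 : ℕ) : ℝ) with hd
  rcases Nat.eq_zero_or_pos n with rfl | hn
  · rw [hd]; norm_num
  have h3 : 3 ≤ d := by rw [hd]; exact_mod_cast Nat.add_le_add_right hn 2
  -- This holds only for `d ≥ 3`, which is why `d = 2` is treated apart.
  have h4 : 3 / 2 * √(d + 1) ≤ d := by
    have h5 : √(d + 1) ≤ 2 / 3 * d := by
      rw [Real.sqrt_le_left (by positivity)]
      nlinarith
    linarith
  calc _ = d ^ (2 * (n + 2)) * ((3 / 2) ^ 2 * (3 / 2 * √(d + 1)) ^ n) := by ring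
    _ ≤ d ^ (2 * (n + 2)) * (d ^ 2 * d ^ n) := by gcongr; linarith
    _ = _ := by ring

/-! ### The discriminant bound -/

/-- The product over all infinite places of the bound `norm_norm_derivative_mul_le`. -/
theorem prod_place_bound {K L : Type*} [Field K] [NumberField K] [Field L] [NumberField L]
    [Algebra K L]
    (f : K[X]) (hirr : Irreducible f) (hdeg : f.natDegree = Module.finrank K L)
    (n : ℕ) (hn : f.natDegree = n + 2)
    (β : L) (hβ : aeval β f = 0) (A : InfinitePlace K → ℝ) (hA : ∀ v i, v (f.coeff i) ≤ A v) :
    ((|Algebra.norm ℚ (aeval β (derivative f))| * |Algebra.norm ℚ f.leadingCoeff| ^ n : ℚ) : ℝ) ≤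
      (((n + 2 : ℕ) : ℝ) ^ (3 * (n + 2))) ^ Module.finrank ℚ K *
        (∏ v : InfinitePlace K, A v ^ v.mult) ^ (2 * n + 2) := by
  have hA0 : ∀ v, 0 ≤ A v := fun v => (apply_nonneg v _).trans (hA v 0)
  have hv : ∀ v : InfinitePlace K,
      v (Algebra.norm K (aeval β (derivative f))) * v f.leadingCoeff ^ n ≤
        ((n + 2 : ℕ) : ℝ) ^ (3 * (n + 2)) * A v ^ (2 * n + 2) := by
    intro v
    let : Algebra K ℂ := v.embedding.toAlgebra
    have h := norm_norm_derivative_mul_le f hirr hdeg n hn β hβ (A v) fun i => by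
      rw [RingHom.algebraMap_toAlgebra, InfinitePlace.norm_embedding_eq]
      exact hA v i
    rw [RingHom.algebraMap_toAlgebra, InfinitePlace.norm_embedding_eq,
      InfinitePlace.norm_embedding_eq] at h
    refine h.trans ?_
    have := hA0 v
    gcongr
    exact const_le n
  have e1 := InfinitePlace.prod_eq_abs_norm (Algebra.norm K (aeval β (derivative f)))
  rw [Algebra.norm_norm] at e1
  have e2 := InfinitePlace.prod_eq_abs_norm f.leadingCoeff
  push_cast at e1 e2 ⊢
  rw [← e1, ← e2, ← Finset.prod_pow, ← Finset.prod_mul_distrib, ← InfinitePlace.sum_mult_eq,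
    ← Finset.prod_pow_eq_pow_sum, ← Finset.prod_pow, ← Finset.prod_mul_distrib]
  refine Finset.prod_le_prod (fun v _ => by positivity) fun v _ => ?_
  have h := pow_le_pow_left₀ (by positivity) (hv v) v.mult
  calc _ = (v (Algebra.norm K (aeval β (derivative f))) * v f.leadingCoeff ^ n) ^ v.mult := by ring
    _ ≤ _ := h
    _ = _ := by
      push_cast
      rw [mul_pow, ← pow_mul (A v), ← pow_mul (A v), mul_comm v.mult]

theorem absNorm_differentIdeal_le {K L : Type*} [Field K] [NumberField K] [Field L]
    [NumberField L] [Algebra K L]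
    (f : K[X]) (hirr : Irreducible f) (hdeg : f.natDegree = Module.finrank K L)
    (n : ℕ) (hn : f.natDegree = n + 2)
    (β : L) (hβ : aeval β f = 0) (s : Finset ℕ) (hs : ∀ i ≤ f.natDegree, i ∈ s)
    (A : InfinitePlace K → ℝ) (hA : ∀ v i, v (f.coeff i) ≤ A v) :
    (Ideal.absNorm (differentIdeal (𝓞 K) (𝓞 L)) : ℝ) ≤
      (((n + 2 : ℕ) : ℝ) ^ (3 * (n + 2))) ^ Module.finrank ℚ K *
        ((∏ v : InfinitePlace K, A v ^ v.mult) /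
          (FractionalIdeal.absNorm (FractionalIdeal.spanFinset (𝓞 K) s fun i => f.coeff i) : ℝ)) ^
          (2 * n + 2) := by
  set c := FractionalIdeal.spanFinset (𝓞 K) s fun i => f.coeff i with hc
  have hlc : f.leadingCoeff ≠ 0 := leadingCoeff_ne_zero.mpr hirr.ne_zero
  have hc0 : c ≠ 0 := FractionalIdeal.spanFinset_ne_zero.mpr ⟨f.natDegree, hs _ le_rfl, hlc⟩
  have hder : aeval β (derivative f) ≠ 0 := hirr.separable.aeval_derivative_ne_zero hβ
  have hint : ∀ γ ∈ c⁻¹, ∀ i, IsIntegral ℤ (γ * f.coeff i) := by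
    intro γ hγ i
    by_cases hi : i ≤ f.natDegree
    · exact mem_inv_spanFinset s (fun i => f.coeff i) hc0 γ hγ i (hs i hi)
    · rw [coeff_eq_zero_of_natDegree_lt (not_le.mp hi), mul_zero]
      exact isIntegral_zero
  set B := 1 + FractionalIdeal.spanSingleton (𝓞 L)⁰ β with hB
  have h1 := absNorm_different_le (aeval β (derivative f)) hder B n c hc0 fun γ hγ x hx => by
    have := mem_pow_of_mem_dual f hirr hdeg (by omega) β hβ γ (hint γ hγ) x hx
    rwa [hn, Nat.add_sub_cancel] at this
  have h2 := absNorm_one_add_ge f.leadingCoeff hlc β c hc0 fun γ hγ u v hu hv =>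
    isIntegral_mul_norm f hirr hdeg β hβ γ (hint γ hγ) u v hu hv
  rw [← hdeg, hn] at h1
  have h3 := prod_place_bound f hirr hdeg n hn β hβ A hA
  have hcpos : 0 < FractionalIdeal.absNorm c := (FractionalIdeal.absNorm_nonneg c).lt_of_ne'
    (FractionalIdeal.absNorm_eq_zero_iff.not.mpr hc0)
  set N := (Ideal.absNorm (differentIdeal (𝓞 K) (𝓞 L)) : ℚ) with hN
  have hN0 : 0 ≤ N := Nat.cast_nonneg _
  -- By `h2`, `n` of the factors `N 𝔠` may be replaced by `|N a_d| N(1, β)`; then `h1` applies.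
  have h4 : N * FractionalIdeal.absNorm c ^ (2 * n + 2) ≤
      |Algebra.norm ℚ (aeval β (derivative f))| * |Algebra.norm ℚ f.leadingCoeff| ^ n := by
    calc N * FractionalIdeal.absNorm c ^ (2 * n + 2)
        = N * FractionalIdeal.absNorm c ^ (n + 2) * FractionalIdeal.absNorm c ^ n := by ring
      _ ≤ N * FractionalIdeal.absNorm c ^ (n + 2) *
          (|Algebra.norm ℚ f.leadingCoeff| * FractionalIdeal.absNorm B) ^ n := by gcongr
      _ = N * FractionalIdeal.absNorm c ^ (n + 2) * FractionalIdeal.absNorm B ^ n *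
          |Algebra.norm ℚ f.leadingCoeff| ^ n := by ring
      _ ≤ _ := by gcongr
  have h5 : ((N * FractionalIdeal.absNorm c ^ (2 * n + 2) : ℚ) : ℝ) ≤ _ :=
    (Rat.cast_le.mpr h4).trans h3
  have hcpos' : (0 : ℝ) < (FractionalIdeal.absNorm c : ℝ) := by exact_mod_cast hcpos
  rw [div_pow, mul_div_assoc', le_div_iff₀ (by positivity)]
  rw [hN] at h5
  push_cast at h5
  convert! h5 using 1
  push_cast
  rfl

/-- The trivial extension is unramified: here the trace is the inverse of `K → L`, so the trace dual
of `𝓞 L` is `𝓞 L`. -/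
theorem absNorm_differentIdeal_eq_one {K L : Type*} [Field K] [NumberField K] [Field L]
    [NumberField L] [Algebra K L] (h : Module.finrank K L = 1) :
    Ideal.absNorm (differentIdeal (𝓞 K) (𝓞 L)) = 1 := by
  have hdual : FractionalIdeal.dual (𝓞 K) K (1 : FractionalIdeal (𝓞 L)⁰ L) = 1 := by
    refine le_antisymm (fun x hx => ?_) (FractionalIdeal.one_le_dual_one (𝓞 K) K)
    obtain ⟨y, rfl⟩ : ∃ y, algebraMap K L y = x := by
      obtain ⟨y, hy⟩ := (finrank_eq_one_iff_of_nonzero' (1 : L) one_ne_zero).mp h x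
      exact ⟨y, by rw [Algebra.algebraMap_eq_smul_one, hy]⟩
    have h10 : (1 : FractionalIdeal (𝓞 L)⁰ L) ≠ 0 := one_ne_zero
    have hx' := (FractionalIdeal.mem_dual h10).mp hx 1
      ((FractionalIdeal.mem_one_iff _).mpr ⟨1, map_one _⟩)
    obtain ⟨t, ht⟩ := hx'
    rw [Algebra.traceForm_apply, mul_one, Algebra.trace_algebraMap, h, one_smul] at ht
    rw [← ht]
    exact (FractionalIdeal.mem_one_iff _).mpr ⟨algebraMap (𝓞 K) (𝓞 L) t, rfl⟩
  have h1 := coeIdeal_differentIdeal (𝓞 K) K L (𝓞 L)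
  rw [hdual, inv_one, FractionalIdeal.coeIdeal_eq_one] at h1
  rw [h1, Ideal.one_eq_top, Ideal.absNorm_top]

/-- The bound for an arbitrary extension `L` of `K` generated by a root `β` of `f`; that `β`
generates `L` is encoded in `[L : K] = deg f`. -/
theorem rpow_absNorm_le {K L : Type*} [Field K] [NumberField K] [Field L]
    [NumberField L] [Algebra K L] (d : ℕ) (hd : 1 ≤ d)
    (f : K[X]) (hirr : Irreducible f) (hdeg : f.natDegree = d)
    (hfin : Module.finrank K L = d) (β : L) (hβ : aeval β f = 0) :
    (Ideal.absNorm (Ideal.spanNorm (𝓞 K) (differentIdeal (𝓞 K) (𝓞 L))) : ℝ) ^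
      ((Module.finrank ℚ K : ℝ)⁻¹) ≤
      (d : ℝ) ^ (3 * d) *
        projHeight (Finset.range (d + 1)) (Finset.nonempty_range_iff.mpr d.succ_ne_zero)
          (fun i => f.coeff i) ^ (2 * (d - 1)) := by
  rw [absNorm_spanNorm_eq]
  obtain rfl | ⟨n, rfl⟩ : d = 1 ∨ ∃ n, d = n + 2 := by
    rcases d with _ | _ | n
    · omega
    · exact .inl rfl
    · exact .inr ⟨n, rfl⟩
  · rw [absNorm_differentIdeal_eq_one hfin]
    simp
  set hne := Finset.nonempty_range_iff.mpr (n + 2).succ_ne_zero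
  have hA0 : ∀ v : InfinitePlace K,
      0 ≤ (Finset.range (n + 2 + 1)).sup' hne fun i => v (f.coeff i) := fun v =>
    (apply_nonneg v (f.coeff 0)).trans
      (Finset.le_sup' (fun i => v (f.coeff i)) (Finset.mem_range.mpr (Nat.succ_pos _)))
  have h := absNorm_differentIdeal_le f hirr (hdeg.trans hfin.symm) n hdeg β hβ
    (Finset.range (n + 2 + 1)) (fun i hi => Finset.mem_range.mpr (by omega))
    (fun v => (Finset.range (n + 2 + 1)).sup' hne fun i => v (f.coeff i)) (fun v i => by
      by_cases hi : i ≤ n + 2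
      · exact Finset.le_sup' (fun i => v (f.coeff i)) (Finset.mem_range.mpr (by omega))
      · rw [coeff_eq_zero_of_natDegree_lt (by omega), map_zero]
        exact hA0 v)
  have hℓ : Module.finrank ℚ K ≠ 0 := Module.finrank_pos.ne'
  unfold projHeight
  set Q : ℝ := (∏ v : InfinitePlace K,
    ((Finset.range (n + 2 + 1)).sup' hne fun i => v (f.coeff i)) ^ v.mult) /
      (FractionalIdeal.absNorm (FractionalIdeal.spanFinset (𝓞 K) (Finset.range (n + 2 + 1))
        fun i => f.coeff i) : ℝ) with hQ
  have hQ0 : 0 ≤ Q := by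
    refine div_nonneg (Finset.prod_nonneg fun v _ => pow_nonneg (hA0 v) _) ?_
    exact_mod_cast FractionalIdeal.absNorm_nonneg _
  calc _ ≤ ((((n + 2 : ℕ) : ℝ) ^ (3 * (n + 2))) ^ Module.finrank ℚ K * Q ^ (2 * n + 2)) ^
        ((Module.finrank ℚ K : ℝ)⁻¹) := by gcongr
    _ = _ := by
      rw [Real.mul_rpow (by positivity) (by positivity),
        Real.pow_rpow_inv_natCast (by positivity) hℓ, ← Real.rpow_pow_comm hQ0]
      congr 2

/-- If `f` is an irreducible polynomial of degree `d ≥ 1` over a number field `K` and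
`β` is a root of `f` in an algebraic closure, then `L = K(β)` satisfies
`D(L/K) ≤ d^(3d) · H_p(f)^(2(d-1))`, where `H_p(f)` is the projective height of the
coefficient vector of `f`. -/
theorem relDq_adjoin_root_le (K : Type*) [Field K] [NumberField K]
    (d : ℕ) (hd : 1 ≤ d) (f : K[X]) (hirr : Irreducible f) (hdeg : f.natDegree = d)
    (β : AlgebraicClosure K) (hβ : Polynomial.aeval β f = 0) :
    relDq K (IntermediateField.adjoin K {β}) ≤
      (d : ℝ) ^ (3 * d) *
        projHeight (Finset.range (d + 1)) (Finset.nonempty_range_iff.mpr d.succ_ne_zero)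
          (fun i => f.coeff i) ^ (2 * (d - 1)) := by
  have hβi : IsIntegral K β := Algebra.IsIntegral.isIntegral β
  have : FiniteDimensional K (IntermediateField.adjoin K {β}) :=
    IntermediateField.adjoin.finiteDimensional hβi
  have h : FiniteDimensional ℚ (IntermediateField.adjoin K {β}) :=
    Module.Finite.trans K _
  unfold relDq
  rw [dif_pos h]
  let : NumberField (IntermediateField.adjoin K {β}) :=
    { to_charZero := inferInstance, to_finiteDimensional := h }
  refine rpow_absNorm_le d hd f hirr hdeg ?_ (IntermediateField.AdjoinSimple.gen K β) ?_
  · rw [IntermediateField.adjoin.finrank hβi, ← minpoly.eq_of_irreducible hirr hβ, ← hdeg]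
    exact natDegree_mul_C_of_isUnit
      (isUnit_iff_ne_zero.mpr (inv_ne_zero (leadingCoeff_ne_zero.mpr hirr.ne_zero))) f
  · apply (algebraMap (IntermediateField.adjoin K {β}) (AlgebraicClosure K)).injective
    rw [map_zero, ← aeval_algebraMap_apply, IntermediateField.AdjoinSimple.algebraMap_gen, hβ]
end
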